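/- arXiv:math/0702432 — 4 statements merged into one kernel-verified Lean document; each statement's English description precedes it below -/
import Mathlib

section
/- If 0 ≤ δ and 4δ³ + 2δ² + 3δ < 1, then every nontrivial measurable set S ⊆ ℝ has a δ-exceptional point. -/
open MeasureTheory Set Filter

/-- The relative measure of `H` in the interval `(p - ε, p + ε)`,
i.e. `λ(H ∩ I_ε(p)) / (2ε)`. -/
noncomputable def relMeasure (H : Set ℝ) (p ε : ℝ) : ℝ :=
  (volume (H ∩ Ioo (p - ε) (p + ε))).toReal / (2 * ε)

/-- `p` is a `δ`-exceptional point for `S` if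
`δ ≤ liminf_{ε→0⁺} λ(S ∩ I_ε(p))/(2ε)` and `limsup_{ε→0⁺} λ(S ∩ I_ε(p))/(2ε) ≤ 1 - δ`. -/
def IsExceptionalPoint (S : Set ℝ) (δ p : ℝ) : Prop :=
  δ ≤ liminf (fun ε => relMeasure S p ε) (nhdsWithin 0 (Ioi 0)) ∧
  limsup (fun ε => relMeasure S p ε) (nhdsWithin 0 (Ioi 0)) ≤ 1 - δ

/-- A set `S ⊆ ℝ` is nontrivial if both `S` and its complement have positive measure. -/
def NontrivialSet (S : Set ℝ) : Prop := 0 < volume S ∧ 0 < volume Sᶜ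

/-- `Φ` is a cumulative mass function of a density with values in `[0,1]`. -/
def Cum (Φ : ℝ → ℝ) : Prop := ∀ a b, a ≤ b → 0 ≤ Φ b - Φ a ∧ Φ b - Φ a ≤ b - a

/-- numerical hypotheses on the constants -/
structure Consts (δ y : ℝ) : Prop where
  dpos : 0 < δ
  dlt : δ < 1/2
  ypos : 0 < y
  ylt : y < 1
  xy : 2 * δ * y < 1 - 2 * δ
  ydef : y * (1 - δ) = 2 * δ * (1 + δ)

lemma rl1 {δ y η T : ℝ} (C : Consts δ y) {Φ : ℝ → ℝ} (hΦ : Cum Φ) (hη : 0 ≤ η)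
    (z r : ℕ → ℝ) (k : ℕ) (hT : 0 < T) 
    (hlow : ∀ i, 1 ≤ i → i ≤ k → Φ (z i + r i) - Φ (z i - r i) < 2 * δ * r i)
    (hr : ∀ i, 1 ≤ i → i ≤ k → 0 < r i ∧ r i ≤ T)
    (hmono : ∀ i, i ≤ k → z i ≤ z (i+1))
    (hs1 : ∀ i, 1 ≤ i → i ≤ k → z (i+1) - z i ≤ y * r i)
    (hs2 : ∀ i, i < k → z (i+1) - z i ≤ y * r (i+1))
    (hG : ∀ u, z 0 ≤ u → u ≤ z 1 →
      (z 1 - u) - (Φ (z 1) - Φ u) ≤ 2 * δ * (z 1 - u) + (Φ (z 1 + r 1) - Φ (z 1)) + η) :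
    ∀ i, 1 ≤ i → i ≤ k → ∀ u, z 0 ≤ u → u ≤ z i + r i →
      Φ u - Φ (z 0) ≤ 2 * δ * (u - z 0) + (T - (Φ (z 0) - Φ (z 0 - T))) + η := by
  have hzz : ∀ i, i ≤ k + 1 → z 0 ≤ z i := by
    intro i
    induction i with
    | zero => intro _; exact le_rfl
    | succ i ih => intro h; exact (ih (by omega)).trans (hmono i (by omega))
  have hd := C.dpos
  have hE := hΦ (z 0 - T) (z 0) (by linarith)
  -- beyond the centre
  have key : ∀ i, 1 ≤ i → i ≤ k → (∀ u, z 0 ≤ u → u ≤ z i - r i →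
      Φ u - Φ (z 0) ≤ 2 * δ * (u - z 0) + (T - (Φ (z 0) - Φ (z 0 - T))) + η) →
      ∀ u, z i ≤ u → u ≤ z i + r i →
      Φ u - Φ (z 0) ≤ 2 * δ * (u - z 0) + (T - (Φ (z 0) - Φ (z 0 - T))) + η := by
    intro i hi hik ih u hu1 hu2
    have hl := hlow i hi hik
    obtain ⟨hr0, hrT⟩ := hr i hi hik
    have hz := hzz i (by omega)
    have h1 := hΦ u (z i + r i) hu2
    have hxu : 2 * δ * (z i) ≤ 2 * δ * u := by nlinarith
    rcases le_total (z 0) (z i - r i) with hs | hs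
    · have h2 := ih (z i - r i) hs le_rfl
      nlinarith
    · have h3 := hΦ (z i - r i) (z 0) hs
      have h4 := hΦ (z 0 - T) (z i - r i) (by linarith)
      have hκ : 0 ≤ (1 - 2 * δ) * (z 0 - (z i - r i)) :=
        mul_nonneg (by linarith [C.dlt]) (by linarith)
      nlinarith
  -- the first gap
  have gap : 1 ≤ k → ∀ u, z 0 ≤ u → u ≤ z 1 →
      Φ u - Φ (z 0) ≤ 2 * δ * (u - z 0) + (T - (Φ (z 0) - Φ (z 0 - T))) + η := by
    intro hk u hu1 hu2
    have hl := hlow 1 le_rfl hk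
    obtain ⟨hr0, hrT⟩ := hr 1 le_rfl hk
    have hg := hG u hu1 hu2
    have h5 := hs2 0 (by omega)
    simp only [zero_add] at h5
    have hy1 : y * r 1 ≤ r 1 := by nlinarith [C.ylt]
    have h6 : z 1 - r 1 ≤ z 0 := by linarith
    have h3 := hΦ (z 1 - r 1) (z 0) h6
    have h4 := hΦ (z 0 - T) (z 1 - r 1) (by have := hzz 1 (by omega); linarith)
    -- linear in u
    have a1 : 2 * δ * (z 1 - z 0) ≤ (1 - 2*δ) * r 1 := by
      have : 2 * δ * (z 1 - z 0) ≤ 2 * δ * (y * r 1) := by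
        apply mul_le_mul_of_nonneg_left h5; linarith
      nlinarith [C.xy]
    have a2 : (1 - 2*δ) * (z 1 - z 0) ≤ (1-2*δ) * r 1 := by
      apply mul_le_mul_of_nonneg_left (by linarith); linarith [C.dlt]
    have a3 : 2 * δ * (z 1 - u) + (1 - 2*δ) * (u - z 0) ≤ (1 - 2*δ) * r 1 := by
      rcases le_total (2*δ) (1-2*δ) with h | h
      · nlinarith
      · nlinarith
    nlinarith
  intro i
  induction i with
  | zero => intro h; omega
  | succ i ih =>
    intro _ hik u hu1 hu2
    rcases Nat.eq_zero_or_pos i with h0 | h0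
    · subst h0
      simp only [zero_add] at *
      rcases le_total u (z 1) with h | h
      · exact gap hik u hu1 h
      · refine key 1 le_rfl hik ?_ u h hu2
        intro v hv1 hv2
        exact gap hik v hv1 (by linarith [(hr 1 le_rfl hik).1])
    · have ih' := ih h0 (by omega)
      obtain ⟨hri, _⟩ := hr i h0 (by omega)
      have hst := hs1 i h0 (by omega)
      have hy1 : y * r i ≤ r i := by nlinarith [C.ylt]
      rcases le_total u (z i + r i) with h | h
      · exact ih' u hu1 h
      · refine key (i+1) (by omega) hik ?_ u (by linarith) hu2
        intro v hv1 hv2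
        refine ih' v hv1 ?_
        linarith [(hr (i+1) (by omega) hik).1]

lemma rl2 {δ y η T : ℝ} (C : Consts δ y) {Φ : ℝ → ℝ} (hΦ : Cum Φ) (hη : 0 ≤ η)
    (hηT : η < (1 - 2 * δ - 2 * δ * y) * T)
    (z r : ℕ → ℝ) (k : ℕ) (hT : 0 < T) 
    (hhigh : 2 * T - (Φ (z 0 + T) - Φ (z 0 - T)) < 2 * δ * T)
    (hlow : ∀ i, 1 ≤ i → i ≤ k → Φ (z i + r i) - Φ (z i - r i) < 2 * δ * r i)
    (hr : ∀ i, 1 ≤ i → i ≤ k → 0 < r i ∧ r i ≤ T)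
    (hmono : ∀ i, i ≤ k → z i ≤ z (i+1))
    (hs0 : z 1 - z 0 ≤ y * T)
    (hs1 : ∀ i, 1 ≤ i → i ≤ k → z (i+1) - z i ≤ y * r i)
    (hs2 : ∀ i, i < k → z (i+1) - z i ≤ y * r (i+1))
    (hG : ∀ i, 1 ≤ i → i ≤ k → ∀ u, z 0 ≤ u → u ≤ z i + r i →
      Φ u - Φ (z 0) ≤ 2 * δ * (u - z 0) + (T - (Φ (z 0) - Φ (z 0 - T))) + η) :
    ∀ i, 1 ≤ i → i ≤ k → z i + r i ≤ z 0 + y * T := by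
  have hzz : ∀ i, i ≤ k + 1 → z 0 ≤ z i := by
    intro i
    induction i with
    | zero => intro _; exact le_rfl
    | succ i ih => intro h; exact (ih (by omega)).trans (hmono i (by omega))
  have hd := C.dpos
  have hyT : y * T ≤ T := by nlinarith [C.ylt]
  -- nestedness
  have nest : ∀ i, 1 ≤ i → i ≤ k → z i ≤ z 0 + y * T → z i + r i ≤ z 0 + T := by
    intro i hi hik hzi
    by_contra hcon
    push Not at hcon
    have hl := hlow i hi hik
    obtain ⟨hr0, hrT⟩ := hr i hi hik
    have hz := hzz i (by omega)
    have b1 := hΦ (z 0 + T) (z i + r i) hcon.le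
    have b2 := hΦ (z 0 - T) (z i - r i) (by linarith)
    have b3 : 2 * δ * (z i - z 0) ≤ 2 * δ * (y * T) := by
      apply mul_le_mul_of_nonneg_left <;> linarith
    have b5 := hΦ (z i - r i) (z 0 + T) (by linarith)
    rcases le_total (z 0) (z i - r i) with hs | hs
    · have b4 := hG i hi hik (z i - r i) hs (by linarith)
      nlinarith
    · have : 0 ≤ (1 - 2 * δ) * (z 0 - (z i - r i)) :=
        mul_nonneg (by linarith [C.dlt]) (by linarith)
      nlinarith
  let H : ℝ → Prop := fun t => ∃ s e, z 0 - T ≤ s ∧ s ≤ z 0 ∧ t ≤ e ∧ e ≤ z 0 + T ∧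
    (1 + δ) * (Φ t - Φ s) + (Φ e - Φ t) ≤ 2 * δ * (t - s) + δ * (e - t)
  have hext : ∀ s e, z 0 - T ≤ s → e ≤ z 0 + T → Φ e - Φ s < δ * (e - s) → (s ≤ z 0 ∨ H s) →
      ∀ t, s ≤ t → t ≤ e → H t := by
    intro s e hs he hl hor t hst hte
    rcases hor with h | ⟨s1, e1, h1, h2, h3, h4, h5⟩
    · refine ⟨s, e, hs, h, hte, he, ?_⟩
      have := hΦ s t hst
      nlinarith
    · rcases le_total t e1 with ht | ht
      · refine ⟨s1, e1, h1, h2, ht, h4, ?_⟩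
        have := hΦ s t hst
        nlinarith
      · refine ⟨s1, e, h1, h2, hte, he, ?_⟩
        have c1 := hΦ s e1 h3
        have c2 := hΦ e1 t ht
        have c3 : δ * (Φ e1 - Φ s) ≤ Φ e1 - Φ s := by nlinarith [C.dlt]
        nlinarith
  have hbound : ∀ t, z 0 ≤ t → H t → t ≤ z 0 + y * T := by
    rintro t ht ⟨s, e, h1, h2, h3, h4, h5⟩
    have c1 := hΦ t e h3
    have c2 := hΦ (z 0 - T) s h1
    have c3 := hΦ e (z 0 + T) h4
    have c4 : (1 + δ) * (Φ e - Φ s) ≤ 2 * δ * (e - s) := by nlinarith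
    have c5 : (e - s) - (Φ e - Φ s) < 2 * δ * T := by linarith
    have c6 : (1 + δ) * ((e - s) - (Φ e - Φ s)) ≤ (1 + δ) * (2 * δ * T) :=
      mul_le_mul_of_nonneg_left c5.le (by linarith)
    have c7 : (1 - δ) * (e - s) ≤ (1 - δ) * (y * T) := by
      have : (1 - δ) * (y * T) = 2 * δ * (1 + δ) * T := by rw [← C.ydef]; ring
      rw [this]; nlinarith
    have c8 := le_of_mul_le_mul_left c7 (by linarith [C.dlt])
    linarith
  have main : ∀ i, 1 ≤ i → i ≤ k → (∀ t, z 0 ≤ t → t ≤ z i + r i → H t) := by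
    intro i
    induction i with
    | zero => intro h; omega
    | succ i ih =>
      intro _ hik
      obtain ⟨hr0, hrT⟩ := hr (i+1) (by omega) hik
      have hz := hzz (i+1) (by omega)
      have hst := hs2 i (by omega)
      have hy1 : y * r (i+1) ≤ r (i+1) := by nlinarith [C.ylt]
      have hl := hlow (i+1) (by omega) hik
      rcases Nat.eq_zero_or_pos i with h0 | h0
      · subst h0
        simp only [zero_add] at *
        have hn := nest 1 le_rfl hik (by linarith)
        intro t ht1 ht2
        exact hext (z 1 - r 1) (z 1 + r 1) (by linarith) hn (by linarith) (Or.inl (by linarith)) t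
          (by linarith) ht2
      · have ih' := ih h0 (by omega)
        obtain ⟨hri, _⟩ := hr i h0 (by omega)
        have hzi := hzz i (by omega)
        have hst1 := hs1 i h0 (by omega)
        have hy2 : y * r i ≤ r i := by nlinarith [C.ylt]
        have hb := hbound (z i + r i) (by linarith) (ih' _ (by linarith) le_rfl)
        have hn := nest (i+1) (by omega) hik (by linarith)
        intro t ht1 ht2
        rcases le_total t (z i + r i) with h | h
        · exact ih' t ht1 h
        · refine hext (z (i+1) - r (i+1)) (z (i+1) + r (i+1)) (by linarith) hn (by linarith) ?_ t
            (by linarith) ht2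
          rcases le_total (z (i+1) - r (i+1)) (z 0) with h' | h'
          · exact Or.inl h'
          · exact Or.inr (ih' _ h' (by linarith))
  intro i hi hik
  have hz := hzz i (by omega)
  exact hbound _ (by linarith [(hr i hi hik).1]) (main i hi hik _ (by linarith [(hr i hi hik).1]) le_rfl)


/-- the cumulative function of colour `c` -/
def Th (Φ : ℝ → ℝ) (c : Bool) (t : ℝ) : ℝ := if c then t - Φ t else Φ t

lemma Th_ne {Φ : ℝ → ℝ} {c d : Bool} (h : c ≠ d) (t : ℝ) : Th Φ c t = t - Th Φ d t := by
  cases c <;> cases d <;> simp_all [Th]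

lemma Cum_Th {Φ : ℝ → ℝ} (h : Cum Φ) (c : Bool) : Cum (Th Φ c) := by
  intro a b hab
  have := h a b hab
  cases c <;> simp only [Th] <;> constructor <;> simp <;> linarith

/-- chains of bad points -/
structure BadChain (δ y η ρ B : ℝ) (Φ : ℝ → ℝ) (n : ℕ) (x R : ℕ → ℝ) (c : ℕ → Bool) : Prop where
  rad : ∀ i, i ≤ n → ρ ≤ R i ∧ R i ≤ B
  bad : ∀ i, i ≤ n → Th Φ (c i) (x i + R i) - Th Φ (c i) (x i - R i) < 2 * δ * R i
  mono : ∀ i, i < n → x i ≤ x (i+1)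
  gap1 : ∀ i, i < n → x (i+1) - x i ≤ y * R i
  gap2 : ∀ i, i < n → x (i+1) - x i ≤ y * R (i+1)
  inv : ∀ i, i < n → c i ≠ c (i+1) →
    (R (i+1) ≤ R i ∧ ∀ u, x i ≤ u → u ≤ x (i+1) →
      (x (i+1) - u) - (Th Φ (c (i+1)) (x (i+1)) - Th Φ (c (i+1)) u) ≤ 2 * δ * (x (i+1) - u) +
        (Th Φ (c (i+1)) (x (i+1) + R (i+1)) - Th Φ (c (i+1)) (x (i+1))) + η) ∨
    (R i ≤ R (i+1) ∧ ∀ u, x i ≤ u → u ≤ x (i+1) →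
      (u - x i) - (Th Φ (c i) u - Th Φ (c i) (x i)) ≤ 2 * δ * (u - x i) +
        (Th Φ (c i) (x i) - Th Φ (c i) (x i - R i)) + η)
  ends : c 0 ≠ c n
  e0 : R 0 = B
  en : R n = B

lemma chain_block {δ y η ρ B : ℝ} (C : Consts δ y) {Φ : ℝ → ℝ} (hΦ : Cum Φ) (hη : 0 ≤ η)
    (hρ : 0 < ρ) (hηρ : η < (1 - 2 * δ - 2 * δ * y) * ρ) {n : ℕ} {x R : ℕ → ℝ} {c : ℕ → Bool}
    (h : BadChain δ y η ρ B Φ n x R c) (j k : ℕ) (hk : 1 ≤ k) (hjk : j + k ≤ n)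
    (hne : c j ≠ c (j+1))
    (hP : ∀ l, 1 ≤ l → l ≤ k → c (j+l) = c (j+1) ∧ R (j+l) ≤ R j)
    (hG : ∀ u, x j ≤ u → u ≤ x (j+1) →
      (x (j+1) - u) - (Th Φ (c (j+1)) (x (j+1)) - Th Φ (c (j+1)) u) ≤ 2 * δ * (x (j+1) - u) +
        (Th Φ (c (j+1)) (x (j+1) + R (j+1)) - Th Φ (c (j+1)) (x (j+1))) + η) :
    (∀ u, x j ≤ u → u ≤ x (j+k) + R (j+k) →
      (u - x j) - (Th Φ (c j) u - Th Φ (c j) (x j)) ≤ 2 * δ * (u - x j) +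
        (Th Φ (c j) (x j) - Th Φ (c j) (x j - R j)) + η) ∧
    x (j+k) + R (j+k) ≤ x j + y * R j := by
  have hΨ := Cum_Th hΦ (c (j+1))
  have hTρ := (h.rad j (by omega)).1
  have hT : 0 < R j := by linarith
  have hηT : η < (1 - 2 * δ - 2 * δ * y) * R j := by
    have := C.xy
    nlinarith
  let z : ℕ → ℝ := fun l => x (min (j+l) n)
  let r : ℕ → ℝ := fun l => R (j+l)
  have hz : ∀ l, l ≤ k → z l = x (j+l) := by
    intro l hl; simp only [z]; congr 1; omega
  have hz1 : ∀ l, l ≤ k → (j + l < n ∧ z (l+1) = x (j+l+1)) ∨ z (l+1) = z l := by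
    intro l hl
    rcases Nat.lt_or_ge (j+l) n with h1 | h1
    · left; refine ⟨h1, ?_⟩; simp only [z]; congr 1; omega
    · right; simp only [z]; congr 1; omega
  have hrp : ∀ l, l ≤ k → 0 < r l := fun l hl => by
    have := (h.rad (j+l) (by omega)).1
    simp only [r]; linarith
  have hlow : ∀ i, 1 ≤ i → i ≤ k →
      Th Φ (c (j+1)) (z i + r i) - Th Φ (c (j+1)) (z i - r i) < 2 * δ * r i := by
    intro i hi hik
    have := h.bad (j+i) (by omega)
    rw [(hP i hi hik).1] at this
    rw [hz i hik]; exact this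
  have hr : ∀ i, 1 ≤ i → i ≤ k → 0 < r i ∧ r i ≤ R j := fun i hi hik =>
    ⟨hrp i hik, (hP i hi hik).2⟩
  have hmono : ∀ i, i ≤ k → z i ≤ z (i+1) := by
    intro i hik
    rcases hz1 i hik with ⟨h1, h2⟩ | h2
    · rw [h2, hz i hik]; exact h.mono _ h1
    · rw [h2]
  have hs1 : ∀ i, i ≤ k → z (i+1) - z i ≤ y * r i := by
    intro i hik
    rcases hz1 i hik with ⟨h1, h2⟩ | h2
    · rw [h2, hz i hik]; exact h.gap1 _ h1
    · rw [h2, sub_self]; exact (mul_pos C.ypos (hrp i hik)).le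
  have hs2 : ∀ i, i < k → z (i+1) - z i ≤ y * r (i+1) := by
    intro i hik
    rw [hz i hik.le, hz (i+1) hik]; exact h.gap2 (j+i) (by omega)
  have z0 : z 0 = x j := hz 0 (by omega)
  have z1 : z 1 = x (j+1) := hz 1 hk
  have hG' : ∀ u, z 0 ≤ u → u ≤ z 1 →
      (z 1 - u) - (Th Φ (c (j+1)) (z 1) - Th Φ (c (j+1)) u) ≤ 2 * δ * (z 1 - u) +
      (Th Φ (c (j+1)) (z 1 + r 1) - Th Φ (c (j+1)) (z 1)) + η := by
    rw [z0, z1]; exact hG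
  have R1 := rl1 C hΨ hη z r k hT hlow hr hmono (fun i _ => hs1 i) hs2 hG'
  have hhigh : 2 * R j - (Th Φ (c (j+1)) (z 0 + R j) - Th Φ (c (j+1)) (z 0 - R j))
      < 2 * δ * R j := by
    have := h.bad j (by omega)
    rw [Th_ne hne, Th_ne hne] at this
    rw [z0]; linarith
  have R2 := rl2 C hΨ hη hηT z r k hT hhigh hlow hr hmono (hs1 0 (by omega))
    (fun i _ => hs1 i) hs2 R1
  have R1' := R1 k hk le_rfl
  have R2' := R2 k hk le_rfl
  rw [hz k le_rfl, z0] at R1' R2'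
  refine ⟨?_, R2'⟩
  intro u hu1 hu2
  have := R1' u hu1 hu2
  rw [Th_ne hne, Th_ne hne, Th_ne hne]
  linarith

lemma chain_step {δ y η ρ B : ℝ} (C : Consts δ y) {Φ : ℝ → ℝ} (hΦ : Cum Φ) (hη : 0 ≤ η)
    (hρ : 0 < ρ) (hηρ : η < (1 - 2 * δ - 2 * δ * y) * ρ) {n : ℕ} {x R : ℕ → ℝ} {c : ℕ → Bool}
    (h : BadChain δ y η ρ B Φ n x R c) (j : ℕ) (hj : j < n) (hne : c j ≠ c (j+1))
    (hmin : ∀ m, m < n → c m ≠ c (m+1) → max (R j) (R (j+1)) ≤ max (R m) (R (m+1)))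
    (hle : R (j+1) ≤ R j)
    (hG : ∀ u, x j ≤ u → u ≤ x (j+1) →
      (x (j+1) - u) - (Th Φ (c (j+1)) (x (j+1)) - Th Φ (c (j+1)) u) ≤ 2 * δ * (x (j+1) - u) +
        (Th Φ (c (j+1)) (x (j+1) + R (j+1)) - Th Φ (c (j+1)) (x (j+1))) + η) :
    ∃ n', n' < n ∧ ∃ x' R' c', BadChain δ y η ρ B Φ n' x' R' c' := by
  have hpos : ∀ i, i ≤ n → 0 < R i := fun i hi => by linarith [(h.rad i hi).1]
  have hTpos := hpos j hj.le
  have hyT : y * R j < R j := by nlinarith [C.ylt]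
  have hxmono : ∀ l, j + l ≤ n → x j ≤ x (j+l) := by
    intro l
    induction l with
    | zero => intro _; exact le_rfl
    | succ l ih => intro hl; exact (ih (by omega)).trans (h.mono (j+l) (by omega))
  have hex : ∃ m, j < m ∧ m ≤ n ∧ ¬ (c m = c (j+1) ∧ R m ≤ R j) := by
    by_contra hcon
    push Not at hcon
    have := (chain_block C hΦ hη hρ hηρ h j (n - j) (by omega) (by omega) hne
      (fun l h1 h2 => by
        by_contra hc
        refine hc ?_
        have h3 := hcon (j+l) (by omega) (by omega)
        exact h3) hG).2
    have h4 := hxmono (n-j) (by omega)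
    rw [show j + (n - j) = n by omega] at this h4
    have := (h.rad j hj.le).2
    have := h.en
    linarith
  classical
  obtain ⟨hm1, hm2, hm3⟩ := Nat.find_spec hex
  have hm4 : ∀ l, j < l → l < Nat.find hex → c l = c (j+1) ∧ R l ≤ R j := by
    intro l h1 h2
    have := Nat.find_min hex h2
    by_contra hc
    exact this ⟨h1, by omega, hc⟩
  generalize Nat.find hex = m at *
  have hm5 : m ≠ j + 1 := by
    rintro rfl; exact hm3 ⟨rfl, hle⟩
  obtain ⟨k, rfl⟩ : ∃ k, m = j + k + 1 := ⟨m - 1 - j, by omega⟩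
  have hk : 1 ≤ k := by omega
  obtain ⟨G, E⟩ := chain_block C hΦ hη hρ hηρ h j k hk (by omega) hne
    (fun l h1 h2 => hm4 (j+l) (by omega) (by omega)) hG
  have hxk := hxmono k (by omega)
  have hck := hm4 (j+k) (by omega) (by omega)
  have hRk : R (j+k) < R j := by linarith
  have hRkp := hpos (j+k) (by omega)
  have hRm : R j ≤ R (j+k+1) := by
    by_cases hc : c (j+k+1) = c (j+1)
    · by_contra hcon
      exact hm3 ⟨hc, by linarith⟩
    · have := hmin (j+k) (by omega) (by rw [hck.1]; exact fun e => hc e.symm)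
      have h2 : R j ≤ max (R (j+k)) (R (j+k+1)) := (le_max_left _ _).trans this
      rcases le_max_iff.1 h2 with h3 | h3
      · linarith
      · exact h3
  have hyk : y * R (j+k) ≤ R (j+k) := by nlinarith [C.ylt]
  have hgap := h.gap1 (j+k) (by omega)
  have hmk := h.mono (j+k) (by omega)
  refine ⟨n - k, by omega, fun l => if l ≤ j then x l else x (l+k),
    fun l => if l ≤ j then R l else R (l+k), fun l => if l ≤ j then c l else c (l+k), ?_⟩
  have tri : ∀ i, i < n - k → (i + 1 ≤ j ∧ i ≤ j ) ∨ i = j ∨ (¬ i ≤ j ∧ ¬ i + 1 ≤ j) := by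
    intro i hi; omega
  have ejk : j + 1 + k = j + k + 1 := by omega
  constructor
  · intro i hi
    split_ifs
    · exact h.rad i (by omega)
    · exact h.rad _ (by omega)
  · intro i hi
    split_ifs
    · exact h.bad i (by omega)
    · exact h.bad _ (by omega)
  · intro i hi
    rcases tri i hi with ⟨h1, h2⟩ | rfl | ⟨h1, h2⟩
    · simp only [h1, h2, if_true]; exact h.mono i (by omega)
    · simp [ejk]; linarith
    · simp only [h1, h2, if_false, Nat.add_right_comm i 1 k]; exact h.mono _ (by omega)
  · intro i hi
    rcases tri i hi with ⟨h1, h2⟩ | rfl | ⟨h1, h2⟩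
    · simp only [h1, h2, if_true]; exact h.gap1 i (by omega)
    · simp [ejk]; linarith
    · simp only [h1, h2, if_false, Nat.add_right_comm i 1 k]; exact h.gap1 _ (by omega)
  · intro i hi
    rcases tri i hi with ⟨h1, h2⟩ | rfl | ⟨h1, h2⟩
    · simp only [h1, h2, if_true]; exact h.gap2 i (by omega)
    · simp [ejk]
      have : y * R i ≤ y * R (i+k+1) := mul_le_mul_of_nonneg_left hRm C.ypos.le
      linarith
    · simp only [h1, h2, if_false, Nat.add_right_comm i 1 k]; exact h.gap2 _ (by omega)
  · intro i hi
    rcases tri i hi with ⟨h1, h2⟩ | rfl | ⟨h1, h2⟩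
    · simp only [h1, h2, if_true]; exact h.inv i (by omega)
    · simp only [ejk, le_refl, if_true, show ¬ i + 1 ≤ i by omega, if_false]
      intro _
      right
      refine ⟨hRm, fun u hu1 hu2 => G u hu1 (by linarith)⟩
    · simp only [h1, h2, if_false, Nat.add_right_comm i 1 k]; exact h.inv _ (by omega)
  · simp only [Nat.zero_le, if_true, show ¬ (n - k ≤ j) by omega, if_false]
    rw [show n - k + k = n by omega]; exact h.ends
  · simp only [Nat.zero_le, if_true]; exact h.e0
  · simp only [show ¬ (n - k ≤ j) by omega, if_false]
    rw [show n - k + k = n by omega]; exact h.en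

lemma Cum_refl {Φ : ℝ → ℝ} (h : Cum Φ) : Cum (fun t => - Φ (-t)) := by
  intro a b hab
  have := h (-b) (-a) (by linarith)
  constructor <;> simp only [] <;> linarith

lemma Th_refl (Φ : ℝ → ℝ) (c : Bool) (t : ℝ) :
    Th (fun t => - Φ (-t)) c t = - Th Φ c (-t) := by
  cases c <;> simp [Th]; ring

lemma chain_refl {δ y η ρ B : ℝ} {Φ : ℝ → ℝ} {n : ℕ} {x R : ℕ → ℝ} {c : ℕ → Bool}
    (h : BadChain δ y η ρ B Φ n x R c) :
    BadChain δ y η ρ B (fun t => - Φ (-t)) n (fun i => - x (n-i)) (fun i => R (n-i))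
      (fun i => c (n-i)) := by
  have key : ∀ i, i < n → ∃ m, m < n ∧ n - i = m + 1 ∧ n - (i+1) = m := fun i hi =>
    ⟨n - (i+1), by omega, by omega, rfl⟩
  constructor
  · intro i hi; exact h.rad _ (by omega)
  · intro i hi
    have := h.bad (n-i) (by omega)
    simp only [Th_refl]
    rw [show -(-x (n-i) + R (n-i)) = x (n-i) - R (n-i) by ring,
      show -(-x (n-i) - R (n-i)) = x (n-i) + R (n-i) by ring]
    linarith
  · intro i hi
    obtain ⟨m, h1, h2, h3⟩ := key i hi
    simp only [h2, h3]
    have := h.mono m h1; linarith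
  · intro i hi
    obtain ⟨m, h1, h2, h3⟩ := key i hi
    simp only [h2, h3]
    have := h.gap2 m h1; linarith
  · intro i hi
    obtain ⟨m, h1, h2, h3⟩ := key i hi
    simp only [h2, h3]
    have := h.gap1 m h1; linarith
  · intro i hi
    obtain ⟨m, h1, h2, h3⟩ := key i hi
    simp only [h2, h3, Th_refl, neg_neg]
    intro hc
    rcases h.inv m h1 (fun e => hc e.symm) with ⟨g1, g2⟩ | ⟨g1, g2⟩
    · right
      refine ⟨g1, fun u hu1 hu2 => ?_⟩
      have := g2 (-u) (by linarith) (by linarith)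
      rw [show -(-x (m+1) - R (m+1)) = x (m+1) + R (m+1) by ring]
      linarith
    · left
      refine ⟨g1, fun u hu1 hu2 => ?_⟩
      have := g2 (-u) (by linarith) (by linarith)
      rw [show -(-x m + R m) = x m - R m by ring]
      linarith
  · simp only [Nat.sub_zero, Nat.sub_self]; exact h.ends.symm
  · simp only [Nat.sub_zero]; exact h.en
  · simp only [Nat.sub_self]; exact h.e0

theorem no_chain {δ y η ρ B : ℝ} (C : Consts δ y) (hη : 0 ≤ η)
    (hρ : 0 < ρ) (hηρ : η < (1 - 2 * δ - 2 * δ * y) * ρ) : ∀ (n : ℕ) (Φ : ℝ → ℝ), Cum Φ →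
    ∀ (x R : ℕ → ℝ) (c : ℕ → Bool), ¬ BadChain δ y η ρ B Φ n x R c := by
  intro n
  induction n using Nat.strong_induction_on with
  | _ n ih =>
  intro Φ hΦ x R c h
  have hne : ((Finset.range n).filter (fun m => c m ≠ c (m+1))).Nonempty := by
    by_contra hcon
    rw [Finset.not_nonempty_iff_eq_empty, Finset.filter_eq_empty_iff] at hcon
    have : ∀ i, i ≤ n → c 0 = c i := by
      intro i
      induction i with
      | zero => intro _; rfl
      | succ i ih2 =>
        intro hi
        have := hcon (Finset.mem_range.2 (show i < n by omega))
        rw [ih2 (by omega)]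
        exact not_not.1 this
    exact h.ends (this n le_rfl)
  obtain ⟨j, hj, hjm⟩ := Finset.exists_min_image _ (fun m => max (R m) (R (m+1))) hne
  rw [Finset.mem_filter, Finset.mem_range] at hj
  obtain ⟨hj, hjc⟩ := hj
  have hmin : ∀ m, m < n → c m ≠ c (m+1) → max (R j) (R (j+1)) ≤ max (R m) (R (m+1)) :=
    fun m h1 h2 => hjm m (Finset.mem_filter.2 ⟨Finset.mem_range.2 h1, h2⟩)
  rcases h.inv j hj hjc with ⟨g1, g2⟩ | ⟨g1, g2⟩
  · obtain ⟨n', hn', x', R', c', h'⟩ := chain_step C hΦ hη hρ hηρ h j hj hjc hmin g1 g2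
    exact ih n' hn' Φ hΦ x' R' c' h'
  · have hr := chain_refl h
    have e1 : n - (n - 1 - j) = j + 1 := by omega
    have e2 : n - (n - 1 - j + 1) = j := by omega
    obtain ⟨n', hn', x', R', c', h'⟩ := chain_step C (Cum_refl hΦ) hη hρ hηρ hr (n-1-j)
      (by omega) (by simp only [e1, e2]; exact hjc.symm) (by
        intro m hm hc
        simp only [e1, e2] at hc ⊢
        have := hmin (n - (m+1)) (by omega)
        rw [show n - (m+1) + 1 = n - m by omega] at this
        rw [max_comm, max_comm (R (n-m))]
        exact this hc.symm) (by simp only [e1, e2]; exact g1) (by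
        simp only [e1, e2, Th_refl, neg_neg]
        intro u hu1 hu2
        have := g2 (-u) (by linarith) (by linarith)
        rw [show -(-x j + R j) = x j - R j by ring]
        linarith)
    exact ih n' hn' _ (Cum_refl hΦ) x' R' c' h'


lemma compact_radii {δ : ℝ} {Φ : ℝ → ℝ} (hΦ : Cum Φ) (a b : ℝ)
    (hbad : ∀ p, ∃ t, 0 < t ∧ ∃ c, Th Φ c (p + t) - Th Φ c (p - t) < 2 * δ * t) :
    ∃ ρ B : ℝ, 0 < ρ ∧ ∀ p ∈ Icc a b, ∃ t, ρ ≤ t ∧ t ≤ B ∧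
      ∃ c, Th Φ c (p + t) - Th Φ c (p - t) < 2 * δ * t := by
  refine IsCompact.induction_on (p := fun s => ∃ ρ B : ℝ, 0 < ρ ∧ ∀ p ∈ s, ∃ t, ρ ≤ t ∧ t ≤ B ∧
      ∃ c, Th Φ c (p + t) - Th Φ c (p - t) < 2 * δ * t) isCompact_Icc ?_ ?_ ?_ ?_
  · exact ⟨1, 1, one_pos, by simp⟩
  · rintro s t hst ⟨ρ, B, h1, h2⟩
    exact ⟨ρ, B, h1, fun p hp => h2 p (hst hp)⟩
  · rintro s t ⟨ρ, B, h1, h2⟩ ⟨ρ', B', h1', h2'⟩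
    refine ⟨min ρ ρ', max B B', lt_min h1 h1', ?_⟩
    rintro p (hp | hp)
    · obtain ⟨T, g1, g2, g3⟩ := h2 p hp
      exact ⟨T, (min_le_left _ _).trans g1, g2.trans (le_max_left _ _), g3⟩
    · obtain ⟨T, g1, g2, g3⟩ := h2' p hp
      exact ⟨T, (min_le_right _ _).trans g1, g2.trans (le_max_right _ _), g3⟩
  · intro p _
    obtain ⟨t, ht, c, hc⟩ := hbad p
    set e := 2 * δ * t - (Th Φ c (p + t) - Th Φ c (p - t)) with he
    have hepos : 0 < e := by linarith
    refine ⟨Metric.ball p (e/2), mem_nhdsWithin_of_mem_nhds (Metric.ball_mem_nhds p (by linarith)),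
      t, t, ht, ?_⟩
    intro q hq
    rw [Metric.mem_ball, Real.dist_eq, abs_lt] at hq
    refine ⟨t, le_rfl, le_rfl, c, ?_⟩
    have hC := Cum_Th hΦ c
    rcases le_total p q with h | h
    · have h1 := hC (p+t) (q+t) (by linarith)
      have h2 := hC (p-t) (q-t) (by linarith)
      linarith
    · have h1 := hC (q+t) (p+t) (by linarith)
      have h2 := hC (q-t) (p-t) (by linarith)
      linarith

theorem exists_good {δ y : ℝ} (C : Consts δ y) {Φ : ℝ → ℝ} (hΦ : Cum Φ) {α β : ℝ} (hαβ : α < β)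
    (hα : ∀ t, t ≤ α → Φ t - Φ α = t - α) (hβ : ∀ t, β ≤ t → Φ t = Φ β) :
    ∃ p, ∀ t, 0 < t → 2 * δ * t ≤ Φ (p + t) - Φ (p - t) ∧
      Φ (p + t) - Φ (p - t) ≤ 2 * (1 - δ) * t := by
  by_contra hcon
  push Not at hcon
  have hd := C.dpos
  have hbad : ∀ p, ∃ t, 0 < t ∧ ∃ c, Th Φ c (p + t) - Th Φ c (p - t) < 2 * δ * t := by
    intro p
    obtain ⟨t, ht, h⟩ := hcon p
    refine ⟨t, ht, ?_⟩
    by_cases h1 : 2 * δ * t ≤ Φ (p + t) - Φ (p - t)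
    · refine ⟨true, ?_⟩
      have := h h1
      simp only [Th, if_true]; linarith
    · refine ⟨false, ?_⟩
      simp only [Th]; simp; linarith
  have left : ∀ p t, 0 < t → p + t ≤ α → Th Φ true (p + t) - Th Φ true (p - t) < 2 * δ * t := by
    intro p t ht h
    have h1 := hα (p+t) h
    have h2 := hα (p-t) (by linarith)
    have : 0 < 2 * δ * t := by positivity
    simp only [Th, if_true]; linarith
  have right : ∀ p t, 0 < t → β ≤ p - t →
      Th Φ false (p + t) - Th Φ false (p - t) < 2 * δ * t := by
    intro p t ht h
    have h1 := hβ (p+t) (by linarith)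
    have h2 := hβ (p-t) h
    have : 0 < 2 * δ * t := by positivity
    simp only [Th]; simp; linarith
  obtain ⟨ρ0, B0, hρ0, hcomp⟩ := compact_radii hΦ (α - 1) (β + 1) hbad
  set ρ := min ρ0 1 with hρdef
  set B := max B0 1 with hBdef
  have hρ : 0 < ρ := lt_min hρ0 one_pos
  have hρ1 : ρ ≤ 1 := min_le_right _ _
  have hB1 : 1 ≤ B := le_max_right _ _
  have hall : ∀ p, ∃ t, ∃ c, (ρ ≤ t ∧ t ≤ B) ∧ Th Φ c (p + t) - Th Φ c (p - t) < 2 * δ * t ∧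
      (p = α - B → t = B ∧ c = true) ∧ (p = β + B → t = B ∧ c = false) := by
    intro p
    by_cases h1 : p = α - B
    · refine ⟨B, true, ⟨by linarith, le_rfl⟩, left p B (by linarith) (by linarith), fun _ => ⟨rfl, rfl⟩, ?_⟩
      intro h; linarith
    by_cases h2 : p = β + B
    · refine ⟨B, false, ⟨by linarith, le_rfl⟩, right p B (by linarith) (by linarith),
        fun h => absurd h h1, fun _ => ⟨rfl, rfl⟩⟩
    by_cases h3 : p < α - 1
    · exact ⟨1, true, ⟨hρ1, hB1⟩, left p 1 one_pos (by linarith), fun h => absurd h h1,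
        fun h => absurd h h2⟩
    by_cases h4 : β + 1 < p
    · exact ⟨1, false, ⟨hρ1, hB1⟩, right p 1 one_pos (by linarith), fun h => absurd h h1,
        fun h => absurd h h2⟩
    obtain ⟨t, g1, g2, c, g3⟩ := hcomp p ⟨by linarith, by linarith⟩
    exact ⟨t, c, ⟨(min_le_left _ _).trans g1, g2.trans (le_max_left _ _)⟩, g3,
      fun h => absurd h h1, fun h => absurd h h2⟩
  choose Tf cf hT hb hl hr using hall
  set κ := (1 - 2 * δ - 2 * δ * y) * ρ with hκ
  have hκ0 : 0 < κ := mul_pos (by linarith [C.xy]) hρ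
  set g := min (κ/2) (y * ρ) with hg
  have hg0 : 0 < g := lt_min (by linarith) (mul_pos C.ypos hρ)
  set Len := β - α + 2 * B with hLen
  have hL0 : 0 < Len := by linarith
  obtain ⟨n, hn⟩ := exists_nat_gt (Len / g)
  have hn0 : (0:ℝ) < n := lt_trans (div_pos hL0 hg0) hn
  have hh : Len / n ≤ g := by
    rw [div_lt_iff₀ hg0] at hn
    rw [div_le_iff₀ hn0]; linarith
  have hh0 : 0 < Len / n := div_pos hL0 hn0
  set h := Len / n with hhdef
  have hhη : h ≤ κ/2 := hh.trans (min_le_left _ _)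
  have hhy : h ≤ y * ρ := hh.trans (min_le_right _ _)
  let x : ℕ → ℝ := fun i => α - B + i * h
  have x0 : x 0 = α - B := by simp [x]
  have xn : x n = β + B := by
    simp only [x, hhdef]; rw [mul_div_cancel₀ _ hn0.ne']; simp only [hLen]; ring
  have xs : ∀ i, x (i+1) = x i + h := by
    intro i; simp only [x]; push_cast; ring
  refine no_chain C (by linarith : (0:ℝ) ≤ κ/2) hρ (by linarith : κ/2 < κ) n Φ hΦ x
    (fun i => Tf (x i)) (fun i => cf (x i)) (B := B) ?_
  constructor
  · intro i _; exact hT _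
  · intro i _; exact hb _
  · intro i _; rw [xs]; linarith
  · intro i _
    have := mul_le_mul_of_nonneg_left (hT (x i)).1 C.ypos.le
    rw [xs]; linarith
  · intro i _
    have := mul_le_mul_of_nonneg_left (hT (x (i+1))).1 C.ypos.le
    linarith [xs i]
  · intro i _ _
    have hx := xs i
    rcases le_total (Tf (x (i+1))) (Tf (x i)) with hle | hle
    · left
      refine ⟨hle, fun u hu1 hu2 => ?_⟩
      have hC := Cum_Th hΦ (cf (x (i+1)))
      have h1 := hC u _ hu2
      have h2 := hC (x (i+1)) (x (i+1) + Tf (x (i+1))) (by linarith [(hT (x (i+1))).1])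
      have : 0 ≤ 2 * δ * (x (i+1) - u) := mul_nonneg (by linarith) (by linarith)
      linarith
    · right
      refine ⟨hle, fun u hu1 hu2 => ?_⟩
      have hC := Cum_Th hΦ (cf (x i))
      have h1 := hC _ u hu1
      have h2 := hC (x i - Tf (x i)) (x i) (by linarith [(hT (x i)).1])
      have : 0 ≤ 2 * δ * (u - x i) := mul_nonneg (by linarith) (by linarith)
      linarith
  · simp only [(hl _ x0).2, (hr _ xn).2]; simp
  · exact (hl _ x0).1
  · exact (hr _ xn).1


lemma exists_cum (S : Set ℝ) (hS : MeasurableSet S) :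
    ∃ Φ : ℝ → ℝ, ∀ p q, p ≤ q → Φ q - Φ p = volume.real (S ∩ Ioc p q) := by
  have hint : ∀ p q, IntervalIntegrable (S.indicator (fun _ => (1:ℝ))) volume p q := by
    intro p q
    rw [intervalIntegrable_iff]
    exact (integrableOn_const (by simp)).indicator hS
  refine ⟨fun t => ∫ x in (0:ℝ)..t, S.indicator (fun _ => (1:ℝ)) x, fun p q hpq => ?_⟩
  simp only
  rw [intervalIntegral.integral_interval_sub_left (hint _ _) (hint _ _),
    intervalIntegral.integral_of_le hpq, setIntegral_indicator hS]
  simp [inter_comm]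

lemma relMeasure_mul (S : Set ℝ) (p t : ℝ) (ht : 0 < t) :
    relMeasure S p t * (2 * t) = volume.real (S ∩ Ioc (p - t) (p + t)) := by
  have h : volume (S ∩ Ioo (p - t) (p + t)) = volume (S ∩ Ioc (p - t) (p + t)) :=
    measure_congr ((ae_eq_refl _).inter Ioo_ae_eq_Ioc)
  unfold relMeasure
  rw [h, div_mul_cancel₀ _ (by positivity)]; rfl

lemma real_Ioc_le (S : Set ℝ) {p q : ℝ} (h : p ≤ q) : volume.real (S ∩ Ioc p q) ≤ q - p := by
  rw [← Real.volume_real_Ioc_of_le h]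
  exact measureReal_mono inter_subset_right (by simp)

lemma relMeasure_bounds (S : Set ℝ) (p t : ℝ) (ht : 0 < t) :
    0 ≤ relMeasure S p t ∧ relMeasure S p t ≤ 1 := by
  have h := relMeasure_mul S p t ht
  have h1 := real_Ioc_le S (show p - t ≤ p + t by linarith)
  have h2 : 0 ≤ volume.real (S ∩ Ioc (p - t) (p + t)) := measureReal_nonneg
  constructor <;> nlinarith

lemma exceptional_of {S : Set ℝ} {δ p : ℝ}
    (h : ∀ᶠ t in nhdsWithin (0:ℝ) (Ioi 0), δ ≤ relMeasure S p t ∧ relMeasure S p t ≤ 1 - δ) :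
    IsExceptionalPoint S δ p := by
  have hb : ∀ᶠ t in nhdsWithin (0:ℝ) (Ioi 0), 0 ≤ relMeasure S p t ∧ relMeasure S p t ≤ 1 := by
    filter_upwards [self_mem_nhdsWithin] with t ht
    exact relMeasure_bounds S p t ht
  constructor
  · refine le_liminf_of_le ?_ (h.mono fun t ht => ht.1)
    exact (isBoundedUnder_of_eventually_le (hb.mono fun t ht => ht.2)).isCoboundedUnder_ge
  · refine limsup_le_of_le ?_ (h.mono fun t ht => ht.2)
    exact (isBoundedUnder_of_eventually_ge (hb.mono fun t ht => ht.1)).isCoboundedUnder_le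

lemma density (S : Set ℝ) (hS : MeasurableSet S) : ∀ᵐ x : ℝ,
    Tendsto (fun t => relMeasure S x t) (nhdsWithin 0 (Ioi 0))
      (nhds (S.indicator (fun _ => (1:ℝ)) x)) := by
  filter_upwards [Besicovitch.ae_tendsto_measure_inter_div_of_measurableSet
    (volume : Measure ℝ) hS] with x hx
  have h1 := (ENNReal.tendsto_toReal (by
    by_cases h : x ∈ S <;> simp [h] : S.indicator (1 : ℝ → ENNReal) x ≠ ⊤)).comp hx
  have h2 : (S.indicator (1 : ℝ → ENNReal) x).toReal = S.indicator (fun _ => (1:ℝ)) x := by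
    by_cases h : x ∈ S <;> simp [h]
  rw [h2] at h1
  refine h1.congr' ?_
  filter_upwards [self_mem_nhdsWithin] with t ht
  have ht : 0 < t := ht
  have h3 : volume (S ∩ Ioo (x - t) (x + t)) = volume (S ∩ Icc (x - t) (x + t)) :=
    measure_congr ((ae_eq_refl _).inter Ioo_ae_eq_Icc)
  simp only [Function.comp, relMeasure]
  rw [h3, Real.closedBall_eq_Icc, ENNReal.toReal_div, Real.volume_Icc,
    ENNReal.toReal_ofReal (by linarith)]
  congr 1; ring

lemma core {δ y : ℝ} (C : Consts δ y) (S : Set ℝ) (hS : MeasurableSet S) {a b : ℝ} (hab : a < b)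
    (ha : ∀ᶠ t in nhdsWithin (0:ℝ) (Ioi 0), 1 - δ < relMeasure S a t)
    (hb : ∀ᶠ t in nhdsWithin (0:ℝ) (Ioi 0), relMeasure S b t < δ) :
    ∃ p, ∀ᶠ t in nhdsWithin (0:ℝ) (Ioi 0), δ ≤ relMeasure S p t ∧ relMeasure S p t ≤ 1 - δ := by
  have hd := C.dpos
  set S' : Set ℝ := Iic a ∪ (S ∩ Ioc a b) with hS'
  have hmS' : MeasurableSet S' := measurableSet_Iic.union (hS.inter measurableSet_Ioc)
  obtain ⟨Φ, hΦ⟩ := exists_cum S' hmS'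
  have hCum : Cum Φ := by
    intro p q hpq
    rw [hΦ p q hpq]
    exact ⟨measureReal_nonneg, real_Ioc_le _ hpq⟩
  have hα : ∀ p q, p ≤ q → q ≤ a → Φ q - Φ p = q - p := by
    intro p q hpq hqa
    rw [hΦ p q hpq, ← Real.volume_real_Ioc_of_le hpq]
    congr 1
    exact inter_eq_right.2 fun u hu => Or.inl (hu.2.trans hqa)
  have hβ : ∀ p q, p ≤ q → b ≤ p → Φ q - Φ p = 0 := by
    intro p q hpq hbp
    rw [hΦ p q hpq]
    have : S' ∩ Ioc p q = ∅ := by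
      ext u
      simp only [hS', mem_inter_iff, mem_union, mem_Iic, mem_Ioc, mem_empty_iff_false, iff_false]
      rintro ⟨h1 | h1, h2⟩ <;> linarith
    rw [this]; simp
  obtain ⟨p, hp⟩ := exists_good C hCum hab
    (fun t ht => by have := hα t a ht le_rfl; linarith)
    (fun t ht => by have := hβ b t ht le_rfl; linarith)
  have up : ∀ t, 0 < t → p + t ≤ b → relMeasure S p t ≤ 1 - δ := by
    intro t ht htb
    have h1 := (hp t ht).2
    rw [hΦ _ _ (by linarith)] at h1
    have h2 : volume.real (S ∩ Ioc (p-t) (p+t)) ≤ volume.real (S' ∩ Ioc (p-t) (p+t)) := by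
      refine measureReal_mono ?_ (measure_ne_top_of_subset inter_subset_right (by simp))
      rintro u ⟨hu1, hu2⟩
      refine ⟨?_, hu2⟩
      rcases le_or_gt u a with h | h
      · exact Or.inl h
      · exact Or.inr ⟨hu1, h, hu2.2.trans htb⟩
    rw [← relMeasure_mul S p t ht] at h2
    nlinarith
  have dn : ∀ t, 0 < t → a ≤ p - t → δ ≤ relMeasure S p t := by
    intro t ht hta
    have h1 := (hp t ht).1
    rw [hΦ _ _ (by linarith)] at h1
    have h2 : volume.real (S' ∩ Ioc (p-t) (p+t)) ≤ volume.real (S ∩ Ioc (p-t) (p+t)) := by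
      refine measureReal_mono ?_ (measure_ne_top_of_subset inter_subset_right (by simp))
      rintro u ⟨hu1 | hu1, hu2⟩
      · exact absurd hu2.1 (not_lt.2 (le_trans hu1 hta))
      · exact ⟨hu1.1, hu2⟩
    rw [← relMeasure_mul S p t ht] at h2
    nlinarith
  have small : ∀ e : ℝ, 0 < e → ∀ᶠ t in nhdsWithin (0:ℝ) (Ioi 0), 0 < t ∧ t < e := by
    intro e he
    filter_upwards [Ioo_mem_nhdsGT he] with t ht using ht
  have pa : a < p := by
    rcases lt_trichotomy a p with h | h | h
    · exact h
    · subst h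
      obtain ⟨t, h1, h2, h3⟩ := (ha.and (small (b - a) (by linarith))).exists
      have := up t h2 (by linarith)
      linarith
    · have h1 := (hp (a - p) (by linarith)).2
      rw [hα _ _ (by linarith) (by linarith)] at h1
      nlinarith
  have pb : p < b := by
    rcases lt_trichotomy p b with h | h | h
    · exact h
    · subst h
      obtain ⟨t, h1, h2, h3⟩ := (hb.and (small (p - a) (by linarith))).exists
      have := dn t h2 (by linarith)
      linarith
    · have h1 := (hp (p - b) (by linarith)).1
      rw [hβ _ _ (by linarith) (by linarith)] at h1
      nlinarith
  refine ⟨p, ?_⟩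
  filter_upwards [small (p - a) (by linarith), small (b - p) (by linarith)] with t h1 h2
  exact ⟨dn t h1.1 (by linarith), up t h1.1 (by linarith)⟩

lemma relMeasure_compl (S : Set ℝ) (hS : MeasurableSet S) (p t : ℝ) (ht : 0 < t) :
    relMeasure Sᶜ p t = 1 - relMeasure S p t := by
  have h1 := relMeasure_mul S p t ht
  have h2 := relMeasure_mul Sᶜ p t ht
  have h3 := measureReal_inter_add_diff (μ := volume) (s := Ioc (p-t) (p+t)) hS (by simp)
  rw [Real.volume_real_Ioc_of_le (by linarith), inter_comm, diff_eq, inter_comm _ Sᶜ,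
    ← h1, ← h2] at h3
  have : (relMeasure Sᶜ p t - (1 - relMeasure S p t)) * (2 * t) = 0 := by linarith
  rcases mul_eq_zero.1 this with h | h <;> linarith

/-- If `0 ≤ δ` and `4δ³ + 2δ² + 3δ < 1`, then every nontrivial measurable set `S ⊆ ℝ`
has a `δ`-exceptional point. -/
theorem exists_exceptional_point (δ : ℝ) (hδ : 0 ≤ δ)
    (hcubic : 4 * δ ^ 3 + 2 * δ ^ 2 + 3 * δ < 1)
    (S : Set ℝ) (hS : MeasurableSet S) (hnt : NontrivialSet S) :
    ∃ p : ℝ, IsExceptionalPoint S δ p := by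
  rcases hδ.eq_or_lt with rfl | hd
  · refine ⟨0, exceptional_of ?_⟩
    filter_upwards [self_mem_nhdsWithin] with t ht
    simpa using relMeasure_bounds S 0 t ht
  have hd3 : δ < 1/3 := by nlinarith [pow_pos hd 3, pow_pos hd 2]
  have C : Consts δ (2 * δ * (1 + δ) / (1 - δ)) := by
    have h1 : 0 < 1 - δ := by linarith
    refine ⟨hd, by linarith, by positivity, ?_, ?_, ?_⟩
    · rw [div_lt_one h1]; nlinarith [pow_pos hd 3, pow_pos hd 2]
    · rw [← mul_div_assoc, div_lt_iff₀ h1]; nlinarith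
    · rw [div_mul_cancel₀ _ h1.ne']
  have hdens := density S hS
  obtain ⟨a, haS, ha⟩ : ∃ a ∈ S, Tendsto (fun t => relMeasure S a t) (nhdsWithin 0 (Ioi 0))
      (nhds (S.indicator (fun _ => (1:ℝ)) a)) :=
    (frequently_ae_mem_iff.2 hnt.1.ne').and_eventually hdens |>.exists
  obtain ⟨b, hbS, hb⟩ : ∃ b ∈ Sᶜ, Tendsto (fun t => relMeasure S b t) (nhdsWithin 0 (Ioi 0))
      (nhds (S.indicator (fun _ => (1:ℝ)) b)) :=
    (frequently_ae_mem_iff.2 hnt.2.ne').and_eventually hdens |>.exists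
  rw [indicator_of_mem haS] at ha
  rw [indicator_of_notMem hbS] at hb
  have ha' := ha.eventually (lt_mem_nhds (show 1 - δ < 1 by linarith))
  have hb' := hb.eventually (gt_mem_nhds (show (0:ℝ) < δ by linarith))
  rcases lt_trichotomy a b with h | h | h
  · obtain ⟨p, hp⟩ := core C S hS h ha' hb'
    exact ⟨p, exceptional_of hp⟩
  · subst h; exact absurd haS hbS
  · obtain ⟨p, hp⟩ := core C Sᶜ hS.compl h (by
      filter_upwards [hb', self_mem_nhdsWithin] with t h1 h2
      rw [relMeasure_compl S hS b t h2]; linarith) (by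
      filter_upwards [ha', self_mem_nhdsWithin] with t h1 h2
      rw [relMeasure_compl S hS a t h2]; linarith)
    refine ⟨p, exceptional_of ?_⟩
    filter_upwards [hp, self_mem_nhdsWithin] with t h1 h2
    rw [relMeasure_compl S hS p t h2] at h1
    constructor <;> linarith [h1.1, h1.2]
end

section
/- If 0 ≤ δ ≤ 1/2 and (2δ)³ + (2δ)² + 2δ > 1, then there exists a nontrivial measurable set S ⊆ ℝ that has no δ-exceptional point. -/
open MeasureTheory Set Filter

/-! ### The finite pattern

The breakpoints `pt 0 < ... < pt 22` describe a finite union of intervals which contains a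
neighbourhood of `-∞`, misses a neighbourhood of `+∞`, and for which every breakpoint has a window
(of radius `win j`) in which the density is `< 0.2718` or `> 1 - 0.2718`. -/

/-- Breakpoints together with two sentinels. -/
def bd (m : ℕ) : ℤ :=
  [-400000, 0, 7893, 12045, 17677, 19676, 23370, 29917, 46739, 55877, 67464, 72429, 81832, 90970,
    107787, 114067, 117233, 118646, 124174, 128031, 134296, 135296, 137165, 163205, 400000].getD m 0

/-- The breakpoints of the pattern. -/
def pt (i : ℕ) : ℤ := bd (i + 1)

/-- The radius of the good window at the breakpoint `pt i`. -/
def win (i : ℕ) : ℤ :=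
  [163205, 7893, 11325, 5632, 3694, 23369, 16822, 16822, 25955, 11587, 9403, 25955, 16817, 16387,
    23097, 3166, 4579, 10107, 9134, 2869, 1869, 137165, 163205].getD i 0

/-- `0` if the window is poor in the set, `1` if it is poor in the complement. -/
def typ (i : ℕ) : ℕ := if i = 0 then 1 else 0

/-- Measure of the pattern (`t = 0`) or of its complement (`t = 1`) in the window of radius `e`
around `pt j`. -/
def wsum (j : ℕ) (e : ℤ) (t : ℕ) : ℤ :=
  ∑ k ∈ Finset.range 12,
    max 0 (min (bd (2 * k + t + 1)) (pt j + e) - max (bd (2 * k + t)) (pt j - e))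

theorem window_check : ∀ j < 23, 10000 * (wsum j (win j) (typ j) + 1) ≤ 5436 * win j ∧
    0 < win j ∧ win j ≤ 200000 ∧ -399999 ≤ pt j - win j ∧ pt j + win j ≤ 399999 := by
  set_option maxRecDepth 100000 in decide

theorem bd_step : ∀ m < 24, bd m + 100 ≤ bd (m + 1) := by
  set_option maxRecDepth 100000 in decide

theorem pt_range : ∀ i < 23, 0 ≤ pt i ∧ pt i ≤ 163205 := by
  set_option maxRecDepth 100000 in decide

theorem pt_gap {i j : ℕ} (hij : i < j) (hj : j < 23) : pt i + 100 ≤ pt j := by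
  induction j with
  | zero => omega
  | succ n ih =>
    have h := bd_step (n + 1) (by omega)
    rcases Nat.lt_succ_iff_lt_or_eq.mp hij with h1 | h1
    · have := ih h1 (by omega)
      unfold pt at *
      omega
    · subst h1
      exact h

theorem pt_gap_real {i j : ℕ} (hij : i < j) (hj : j < 23) : (pt i : ℝ) + 100 ≤ pt j := by
  exact_mod_cast pt_gap hij hj

/-- Number of breakpoints `≤ x`. -/
noncomputable def idx (x : ℝ) : ℕ := ∑ j ∈ Finset.range 23, if (pt j : ℝ) ≤ x then 1 else 0

theorem idx_eq {x : ℝ} {m : ℕ} (hm : m ≤ 23) (h : ∀ j < 23, ((pt j : ℝ) ≤ x ↔ j < m)) :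
    idx x = m := by
  unfold idx
  rw [← Finset.card_filter]
  have : (Finset.range 23).filter (fun j => (pt j : ℝ) ≤ x) = Finset.range m := by
    ext j
    simp only [Finset.mem_filter, Finset.mem_range]
    constructor
    · rintro ⟨h1, h2⟩
      exact (h j h1).1 h2
    · intro h1
      exact ⟨by omega, (h j (by omega)).2 h1⟩
  rw [this, Finset.card_range]

theorem idx_exists (x : ℝ) : ∃ m ≤ 23, ∀ j < 23, ((pt j : ℝ) ≤ x ↔ j < m) := by
  classical
  by_cases h : ∃ j, j < 23 ∧ x < pt j
  · refine ⟨Nat.find h, (Nat.find_spec h).1.le, fun j hj => ⟨fun h1 => ?_, fun h1 => ?_⟩⟩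
    · by_contra h2
      have h3 := (Nat.find_spec h).2
      rcases Nat.eq_or_lt_of_le (not_lt.mp h2) with h4 | h4
      · rw [h4] at h3
        linarith
      · have := pt_gap_real h4 hj
        linarith
    · have := Nat.find_min h h1
      by_contra h2
      exact this ⟨hj, not_le.mp h2⟩
  · push Not at h
    exact ⟨23, le_rfl, fun j hj => ⟨fun _ => hj, fun _ => h j hj⟩⟩

theorem idx_congr {x y : ℝ} (h : ∀ j < 23, ((pt j : ℝ) ≤ x ↔ (pt j : ℝ) ≤ y)) :
    idx x = idx y := by
  unfold idx
  refine Finset.sum_congr rfl fun j hj => ?_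
  simp only [h j (Finset.mem_range.mp hj)]

theorem idx_measurable : Measurable idx := by
  unfold idx
  refine Finset.measurable_sum _ fun j _ => ?_
  exact Measurable.ite measurableSet_Ici measurable_const measurable_const

/-- The position of `x` in terms of the components. -/
theorem idx_spec (x : ℝ) (h1 : -400000 ≤ x) (h2 : x ≤ 400000) :
    idx x ≤ 23 ∧ (bd (idx x) : ℝ) ≤ x ∧ x ≤ bd (idx x + 1) := by
  obtain ⟨m, hm, h⟩ := idx_exists x
  rw [idx_eq hm h]
  refine ⟨hm, ?_, ?_⟩
  · rcases m with _ | m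
    · have : bd 0 = -400000 := rfl
      rw [this]
      push_cast
      exact h1
    · exact (h m (by omega)).2 (by omega)
  · rcases Nat.eq_or_lt_of_le hm with h3 | h3
    · subst h3
      have : bd (23 + 1) = 400000 := rfl
      rw [this]
      push_cast
      exact h2
    · by_contra h4
      have := (h m h3).1 (not_le.mp h4).le
      omega

theorem idx_left {i : ℕ} (hi : i < 23) {x : ℝ} (h1 : x < pt i) (h2 : (pt i : ℝ) - 100 < x) :
    idx x = i := by
  refine idx_eq hi.le fun j hj => ⟨fun h => ?_, fun h => ?_⟩
  · by_contra h3
    rcases Nat.eq_or_lt_of_le (not_lt.mp h3) with h4 | h4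
    · subst h4
      linarith
    · have := pt_gap_real h4 hj
      linarith
  · have := pt_gap_real h hi
    linarith

theorem idx_right {i : ℕ} (hi : i < 23) {x : ℝ} (h1 : pt i ≤ x) (h2 : x < (pt i : ℝ) + 100) :
    idx x = i + 1 := by
  refine idx_eq hi fun j hj => ⟨fun h => ?_, fun h => ?_⟩
  · by_contra h3
    have := pt_gap_real (show i < j by omega) hj
    linarith
  · rcases Nat.lt_succ_iff_lt_or_eq.mp h with h4 | h4
    · have := pt_gap_real h4 hi
      linarith
    · subst h4
      exact h1

/-! ### The self-similar set -/

/-- The expanding map near the breakpoint `pt i`. -/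
noncomputable def zoom (i : ℕ) (x : ℝ) : ℝ := ((-1) ^ i * 10 ^ 8) * (x - pt i)

/-- Stages of the construction. -/
noncomputable def stage : ℕ → Set ℝ
  | 0 => {x | (∀ i < 23, 1 / 100 < |x - pt i|) ∧ Even (idx x)}
  | n + 1 => {x | ∃ i < 23, |x - pt i| ≤ 1 / 100 ∧ zoom i x ∈ stage n}

/-- The self-similar set. -/
noncomputable def fractal : Set ℝ := ⋃ n, stage n

theorem zoom_measurable (i : ℕ) : Measurable (zoom i) := by
  unfold zoom
  fun_prop

theorem stage_measurable (n : ℕ) : MeasurableSet (stage n) := by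
  induction n with
  | zero =>
    have : stage 0 = (⋂ i ∈ Finset.range 23, {x : ℝ | 1 / 100 < |x - pt i|}) ∩
        idx ⁻¹' {m | Even m} := by
      ext x
      simp [stage]
    rw [this]
    refine MeasurableSet.inter ?_ (idx_measurable (MeasurableSet.of_discrete))
    refine Finset.measurableSet_biInter _ fun i _ => ?_
    exact measurableSet_lt measurable_const (by fun_prop)
  | succ n ih =>
    have : stage (n + 1) = ⋃ i ∈ Finset.range 23, ({x : ℝ | |x - pt i| ≤ 1 / 100} ∩
        zoom i ⁻¹' stage n) := by
      ext x
      simp only [stage, mem_ofPred_eq, mem_iUnion, Finset.mem_range, mem_inter_iff, mem_preimage,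
        exists_prop]
    rw [this]
    refine Finset.measurableSet_biUnion _ fun i _ => ?_
    exact (measurableSet_le (by fun_prop) measurable_const).inter (zoom_measurable i ih)

theorem fractal_measurable : MeasurableSet fractal := MeasurableSet.iUnion stage_measurable

theorem near_unique {i j : ℕ} (hi : i < 23) (hj : j < 23) {x : ℝ} (h1 : |x - pt i| ≤ 1 / 100)
    (h2 : |x - pt j| ≤ 1 / 100) : i = j := by
  rw [abs_le] at h1 h2
  rcases lt_trichotomy i j with h | h | h
  · have := pt_gap_real h hj
    linarith
  · exact h
  · have := pt_gap_real h hi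
    linarith

theorem fractal_far {x : ℝ} (h : ∀ i < 23, 1 / 100 < |x - pt i|) :
    x ∈ fractal ↔ Even (idx x) := by
  unfold fractal
  rw [mem_iUnion]
  constructor
  · rintro ⟨n, hn⟩
    rcases n with _ | n
    · exact hn.2
    · obtain ⟨i, hi, h1, -⟩ := hn
      exact absurd (h i hi) (not_lt.mpr h1)
  · intro h1
    exact ⟨0, h, h1⟩

theorem fractal_near {i : ℕ} (hi : i < 23) {x : ℝ} (h : |x - pt i| ≤ 1 / 100) :
    x ∈ fractal ↔ zoom i x ∈ fractal := by
  unfold fractal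
  rw [mem_iUnion, mem_iUnion]
  constructor
  · rintro ⟨n, hn⟩
    rcases n with _ | n
    · exact absurd (hn.1 i hi) (not_lt.mpr h)
    · obtain ⟨j, hj, h1, h2⟩ := hn
      rw [near_unique hi hj h h1]
      exact ⟨n, h2⟩
  · rintro ⟨n, hn⟩
    exact ⟨n + 1, i, hi, h, hn⟩

theorem fractal_neg {x : ℝ} (hx : x ≤ -200000) : x ∈ fractal := by
  have hr : ∀ i < 23, (0 : ℝ) ≤ pt i := fun i hi => by exact_mod_cast (pt_range i hi).1
  rw [fractal_far]
  · have : idx x = 0 := idx_eq (by norm_num) fun j hj =>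
      ⟨fun h => by have := hr j hj; linarith, fun h => by omega⟩
    rw [this]
    exact Even.zero
  · intro i hi
    have := hr i hi
    rw [lt_abs]
    right
    linarith

theorem fractal_pos {x : ℝ} (hx : 200000 ≤ x) : x ∉ fractal := by
  have hr : ∀ i < 23, (pt i : ℝ) ≤ 163205 := fun i hi => by exact_mod_cast (pt_range i hi).2
  rw [fractal_far]
  · have : idx x = 23 := idx_eq le_rfl fun j hj =>
      ⟨fun h => hj, fun h => by have := hr j hj; linarith⟩
    rw [this]
    decide
  · intro i hi
    have := hr i hi
    rw [lt_abs]
    left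
    linarith

/-- Away from the breakpoints, the set is the pattern. -/
theorem fractal_pattern {x : ℝ} (h : ∀ i < 23, 1 / 500 ≤ |x - pt i|) :
    x ∈ fractal ↔ Even (idx x) := by
  by_cases hx : ∀ i < 23, 1 / 100 < |x - pt i|
  · exact fractal_far hx
  push Not at hx
  obtain ⟨i, hi, h1⟩ := hx
  rw [fractal_near hi h1]
  have h2 := h i hi
  rw [abs_le] at h1
  rcases le_abs.mp h2 with h3 | h3
  · rw [idx_right hi (by linarith) (by linarith)]
    rcases Nat.even_or_odd i with he | ho
    · have : zoom i x ∉ fractal := by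
        apply fractal_pos
        rw [zoom, he.neg_one_pow]
        linarith
      have h5 : ¬ Even (i + 1) := by
        rw [Nat.even_add_one]
        exact not_not.mpr he
      tauto
    · have : zoom i x ∈ fractal := by
        apply fractal_neg
        rw [zoom, ho.neg_one_pow]
        linarith
      have h5 : Even (i + 1) := ho.add_one
      tauto
  · rw [idx_left hi (by linarith) (by linarith)]
    rcases Nat.even_or_odd i with he | ho
    · have : zoom i x ∈ fractal := by
        apply fractal_neg
        rw [zoom, he.neg_one_pow]
        linarith
      tauto
    · have : zoom i x ∉ fractal := by
        apply fractal_pos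
        rw [zoom, ho.neg_one_pow]
        linarith
      have h5 : ¬ Even i := Nat.not_even_iff_odd.mpr ho
      tauto

/-! ### Densities -/

/-- The relative measure is not in the middle range. -/
def BadScale (p ε : ℝ) : Prop :=
  relMeasure fractal p ε < 2718 / 10000 ∨ 1 - 2718 / 10000 < relMeasure fractal p ε

theorem relMeasure_zoom {i : ℕ} (hi : i < 23) {p ε : ℝ} (hε : 0 < ε)
    (h : |p - pt i| + ε / 10 ^ 8 ≤ 1 / 100) :
    relMeasure fractal p (ε / 10 ^ 8) = relMeasure fractal (zoom i p) ε := by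
  have hs : ((-1 : ℝ) ^ i = 1) ∨ ((-1 : ℝ) ^ i = -1) := neg_one_pow_eq_or ℝ i
  have hset : fractal ∩ Ioo (p - ε / 10 ^ 8) (p + ε / 10 ^ 8) =
      zoom i ⁻¹' (fractal ∩ Ioo (zoom i p - ε) (zoom i p + ε)) := by
    ext x
    have hI : x ∈ Ioo (p - ε / 10 ^ 8) (p + ε / 10 ^ 8) ↔
        zoom i x ∈ Ioo (zoom i p - ε) (zoom i p + ε) := by
      simp only [mem_Ioo, zoom]
      rcases hs with hs | hs <;> rw [hs] <;> constructor <;> rintro ⟨h1, h2⟩ <;> constructor <;>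
        linarith
    rw [mem_inter_iff, mem_preimage, mem_inter_iff, ← hI]
    refine and_congr_left fun hx => fractal_near hi ?_
    have h3 : |x - p| ≤ ε / 10 ^ 8 := by
      rw [abs_le]
      constructor <;> linarith [hx.1, hx.2]
    have := abs_sub_le x p (pt i)
    linarith
  have hvol : ∀ s : Set ℝ, volume (zoom i ⁻¹' s) = ENNReal.ofReal (1 / 10 ^ 8) * volume s := by
    intro s
    have h1 : zoom i ⁻¹' s = (fun x => x + (-(pt i : ℝ))) ⁻¹'
        ((((-1 : ℝ) ^ i * 10 ^ 8) * ·) ⁻¹' s) := by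
      ext x
      simp [zoom, sub_eq_add_neg]
    rw [h1, measure_preimage_add_right, Real.volume_preimage_mul_left]
    · congr 2
      rcases hs with hs | hs <;> rw [hs] <;> norm_num [abs_of_pos]
    · rcases hs with hs | hs <;> rw [hs] <;> norm_num
  unfold relMeasure
  rw [hset, hvol, ENNReal.toReal_mul, ENNReal.toReal_ofReal (by norm_num)]
  field_simp

theorem relMeasure_add {p ε : ℝ} (hε : 0 < ε) :
    relMeasure fractal p ε +
      (volume (Ioo (p - ε) (p + ε) \ fractal)).toReal / (2 * ε) = 1 := by
  have h := measure_inter_add_sdiff (μ := volume) (Ioo (p - ε) (p + ε)) fractal_measurable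
  have hf : volume (Ioo (p - ε) (p + ε)) = ENNReal.ofReal (2 * ε) := by
    rw [Real.volume_Ioo]
    congr 1
    ring
  have hfin : volume (Ioo (p - ε) (p + ε)) ≠ ⊤ := by rw [hf]; exact ENNReal.ofReal_ne_top
  have h1 : volume (Ioo (p - ε) (p + ε) ∩ fractal) ≠ ⊤ :=
    measure_ne_top_of_subset inter_subset_left hfin
  have h2 : volume (Ioo (p - ε) (p + ε) \ fractal) ≠ ⊤ :=
    measure_ne_top_of_subset sdiff_subset hfin
  unfold relMeasure
  rw [inter_comm, ← add_div, ← ENNReal.toReal_add h1 h2, h, hf, ENNReal.toReal_ofReal (by linarith)]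
  field_simp

theorem relMeasure_nonneg {p ε : ℝ} (hε : 0 < ε) : 0 ≤ relMeasure fractal p ε := by
  unfold relMeasure
  positivity

theorem relMeasure_le_one {p ε : ℝ} (hε : 0 < ε) : relMeasure fractal p ε ≤ 1 := by
  have := relMeasure_add (p := p) hε
  have h2 : 0 ≤ (volume (Ioo (p - ε) (p + ε) \ fractal)).toReal / (2 * ε) := by positivity
  linarith

theorem bad_far {p ε : ℝ} (hp : ∀ i < 23, 1 / 200 < |p - pt i|) (hε : 0 < ε)
    (hε1 : ε ≤ 1 / 1000) : BadScale p ε := by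
  have key : ∀ x ∈ Ioo (p - ε) (p + ε), (x ∈ fractal ↔ Even (idx p)) := by
    intro x hx
    have hxp : |x - p| < 1 / 1000 := by
      rw [abs_lt]
      constructor <;> linarith [hx.1, hx.2]
    rw [fractal_pattern]
    · rw [idx_congr (x := x) (y := p)]
      intro j hj
      rw [abs_lt] at hxp
      rcases lt_abs.mp (hp j hj) with h | h <;> constructor <;> intro _ <;> linarith
    · intro i hi
      have := abs_sub_le p x (pt i)
      rw [abs_sub_comm p x] at this
      linarith [hp i hi]
  by_cases he : Even (idx p)
  · right
    have h0 : Ioo (p - ε) (p + ε) \ fractal = ∅ := by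
      ext x
      simp only [Set.mem_sdiff, mem_empty_iff_false, iff_false, not_and, not_not]
      exact fun hx => (key x hx).2 he
    have := relMeasure_add (p := p) hε
    rw [h0] at this
    simp at this
    rw [this]
    norm_num
  · left
    have h0 : fractal ∩ Ioo (p - ε) (p + ε) = ∅ := by
      ext x
      simp only [mem_inter_iff, mem_empty_iff_false, iff_false, not_and]
      exact fun hx hx2 => he ((key x hx2).1 hx)
    unfold relMeasure
    rw [h0]
    norm_num

/-- A point of the set lies in a slightly thickened even component. -/
theorem mem_component {x : ℝ} (h1 : -400000 ≤ x) (h2 : x ≤ 400000) (hx : x ∈ fractal) :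
    ∃ k < 12, (bd (2 * k + 0) : ℝ) - 1 / 100 ≤ x ∧ x ≤ bd (2 * k + 0 + 1) + 1 / 100 := by
  obtain ⟨hi, h3, h4⟩ := idx_spec x h1 h2
  by_cases he : Even (idx x)
  · obtain ⟨k, hk⟩ := he
    have hk' : idx x = 2 * k + 0 := by omega
    rw [hk'] at h3 h4
    exact ⟨k, by omega, by linarith, by linarith⟩
  · have hn : ¬ ∀ i < 23, 1 / 100 < |x - pt i| := fun h => he ((fractal_far h).1 hx)
    push Not at hn
    obtain ⟨i, hi, h5⟩ := hn
    rw [abs_le] at h5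
    have h6 := bd_step i (by omega)
    have h7 := bd_step (i + 1) (by omega)
    have h6' : (bd i : ℝ) + 100 ≤ bd (i + 1) := by exact_mod_cast h6
    have h7' : (bd (i + 1) : ℝ) + 100 ≤ bd (i + 1 + 1) := by exact_mod_cast h7
    unfold pt at h5
    rcases Nat.even_or_odd' i with ⟨k, hk | hk⟩
    · refine ⟨k, by omega, ?_, ?_⟩
      · rw [show 2 * k + 0 = i by omega]
        linarith
      · rw [show 2 * k + 0 + 1 = i + 1 by omega]
        linarith
    · refine ⟨k + 1, by omega, ?_, ?_⟩
      · rw [show 2 * (k + 1) + 0 = i + 1 by omega]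
        linarith
      · rw [show 2 * (k + 1) + 0 + 1 = i + 1 + 1 by omega]
        linarith

/-- A point of the complement lies in a slightly thickened odd component. -/
theorem not_mem_component {x : ℝ} (h1 : -400000 ≤ x) (h2 : x ≤ 400000) (hx : x ∉ fractal) :
    ∃ k < 12, (bd (2 * k + 1) : ℝ) - 1 / 100 ≤ x ∧ x ≤ bd (2 * k + 1 + 1) + 1 / 100 := by
  obtain ⟨hi, h3, h4⟩ := idx_spec x h1 h2
  by_cases he : Even (idx x)
  · have hn : ¬ ∀ i < 23, 1 / 100 < |x - pt i| := fun h => hx ((fractal_far h).2 he)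
    push Not at hn
    obtain ⟨i, hi, h5⟩ := hn
    rw [abs_le] at h5
    have h6 := bd_step i (by omega)
    have h7 := bd_step (i + 1) (by omega)
    have h6' : (bd i : ℝ) + 100 ≤ bd (i + 1) := by exact_mod_cast h6
    have h7' : (bd (i + 1) : ℝ) + 100 ≤ bd (i + 1 + 1) := by exact_mod_cast h7
    unfold pt at h5
    rcases Nat.even_or_odd' i with ⟨k, hk | hk⟩
    · refine ⟨k, by omega, ?_, ?_⟩
      · rw [show 2 * k + 1 = i + 1 by omega]
        linarith
      · rw [show 2 * k + 1 + 1 = i + 1 + 1 by omega]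
        linarith
    · refine ⟨k, by omega, ?_, ?_⟩
      · rw [show 2 * k + 1 = i by omega]
        linarith
      · rw [show 2 * k + 1 + 1 = i + 1 by omega]
        linarith
  · obtain ⟨k, hk⟩ := Nat.not_even_iff_odd.mp he
    rw [hk] at h3 h4
    exact ⟨k, by omega, by linarith, by linarith⟩

theorem volume_le_wsum {X : Set ℝ} {p : ℝ} {j t : ℕ} {e : ℤ} (hp : |p - pt j| ≤ 1 / 200)
    (hX : X ⊆ Ioo (p - e) (p + e))
    (h : ∀ x ∈ X, ∃ k < 12, (bd (2 * k + t) : ℝ) - 1 / 100 ≤ x ∧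
      x ≤ bd (2 * k + t + 1) + 1 / 100) :
    (volume X).toReal ≤ wsum j e t + 24 / 100 := by
  rw [abs_le] at hp
  let lo : ℕ → ℤ := fun k => max (bd (2 * k + t)) (pt j - e)
  let hi : ℕ → ℤ := fun k => min (bd (2 * k + t + 1)) (pt j + e)
  have hcov : X ⊆ ⋃ k ∈ Finset.range 12, Icc ((lo k : ℝ) - 1 / 100) (hi k + 1 / 100) := by
    intro x hx
    obtain ⟨k, hk, h1, h2⟩ := h x hx
    obtain ⟨h3, h4⟩ := hX hx
    simp only [mem_iUnion, Finset.mem_range]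
    refine ⟨k, hk, ?_, ?_⟩
    · simp only [lo, Int.cast_max, Int.cast_sub]
      rw [sub_le_iff_le_add, max_le_iff]
      constructor <;> linarith
    · simp only [hi, Int.cast_min, Int.cast_add]
      rw [← sub_le_iff_le_add, le_min_iff]
      constructor <;> linarith
  have hle : volume X ≤ ENNReal.ofReal (wsum j e t + 24 / 100) := by
    calc volume X ≤ volume (⋃ k ∈ Finset.range 12, Icc ((lo k : ℝ) - 1 / 100) (hi k + 1 / 100)) :=
          measure_mono hcov
      _ ≤ ∑ k ∈ Finset.range 12, volume (Icc ((lo k : ℝ) - 1 / 100) (hi k + 1 / 100)) :=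
          measure_biUnion_finset_le _ _
      _ ≤ ∑ k ∈ Finset.range 12, ENNReal.ofReal (max 0 ((hi k : ℝ) - lo k) + 2 / 100) := by
          refine Finset.sum_le_sum fun k _ => ?_
          rw [Real.volume_Icc]
          apply ENNReal.ofReal_le_ofReal
          have := le_max_right 0 ((hi k : ℝ) - lo k)
          linarith
      _ = ENNReal.ofReal (∑ k ∈ Finset.range 12, (max 0 ((hi k : ℝ) - lo k) + 2 / 100)) := by
          rw [ENNReal.ofReal_sum_of_nonneg]
          intro k _
          positivity
      _ = ENNReal.ofReal (wsum j e t + 24 / 100) := by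
          congr 1
          rw [Finset.sum_add_distrib]
          congr 1
          · simp only [wsum, lo, hi]
            push_cast
            rfl
          · norm_num
  have hnn : (0 : ℝ) ≤ wsum j e t := by
    have : 0 ≤ wsum j e t := Finset.sum_nonneg fun k _ => le_max_left _ _
    exact_mod_cast this
  calc (volume X).toReal ≤ (ENNReal.ofReal (wsum j e t + 24 / 100)).toReal :=
        ENNReal.toReal_mono ENNReal.ofReal_ne_top hle
    _ = _ := ENNReal.toReal_ofReal (by linarith)

theorem bad_near {j : ℕ} (hj : j < 23) {p : ℝ} (hp : |p - pt j| ≤ 1 / 200) :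
    ∃ ε, 0 < ε ∧ ε ≤ 200000 ∧ BadScale p ε := by
  obtain ⟨h1, h2, h3, h4, h5⟩ := window_check j hj
  have h1' : 10000 * ((wsum j (win j) (typ j) : ℝ) + 1) ≤ 5436 * win j := by exact_mod_cast h1
  have h2' : (0 : ℝ) < win j := by exact_mod_cast h2
  have h3' : (win j : ℝ) ≤ 200000 := by exact_mod_cast h3
  have h4' : (-399999 : ℝ) ≤ pt j - win j := by exact_mod_cast h4
  have h5' : (pt j : ℝ) + win j ≤ 399999 := by exact_mod_cast h5
  have hp' := abs_le.mp hp
  refine ⟨win j, h2', h3', ?_⟩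
  have hb : ∀ x ∈ Ioo (p - win j) (p + win j), -400000 ≤ x ∧ x ≤ 400000 := fun x hx =>
    ⟨by linarith [hx.1], by linarith [hx.2]⟩
  by_cases hj0 : j = 0
  · right
    have ht : typ j = 1 := by rw [typ, if_pos hj0]
    rw [ht] at h1'
    have hv := volume_le_wsum (X := Ioo (p - win j) (p + win j) \ fractal) (t := 1) hp sdiff_subset
      (fun x hx => not_mem_component (hb x hx.1).1 (hb x hx.1).2 hx.2)
    have hadd := relMeasure_add (p := p) h2'
    have : (volume (Ioo (p - win j) (p + win j) \ fractal)).toReal / (2 * win j)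
        < 2718 / 10000 := by
      rw [div_lt_iff₀ (by linarith)]
      linarith
    linarith
  · left
    have ht : typ j = 0 := by rw [typ, if_neg hj0]
    rw [ht] at h1'
    have hv := volume_le_wsum (X := fractal ∩ Ioo (p - win j) (p + win j)) (t := 0) hp
      inter_subset_right (fun x hx => mem_component (hb x hx.2).1 (hb x hx.2).2 hx.1)
    unfold relMeasure
    rw [div_lt_iff₀ (by linarith)]
    linarith

theorem bad_small (n : ℕ) : ∀ p : ℝ, ∃ ε, 0 < ε ∧ ε ≤ 200000 / (10 ^ 8) ^ n ∧ BadScale p ε := by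
  induction n with
  | zero =>
    intro p
    by_cases hp : ∀ i < 23, 1 / 200 < |p - pt i|
    · exact ⟨1 / 1000, by norm_num, by norm_num, bad_far hp (by norm_num) le_rfl⟩
    · push Not at hp
      obtain ⟨j, hj, hp⟩ := hp
      simpa using bad_near hj hp
  | succ n ih =>
    intro p
    by_cases hp : ∀ i < 23, 1 / 200 < |p - pt i|
    · exact ⟨min (1 / 1000) (200000 / (10 ^ 8) ^ (n + 1)), by positivity, min_le_right _ _,
        bad_far hp (by positivity) (min_le_left _ _)⟩
    · push Not at hp
      obtain ⟨j, hj, hp⟩ := hp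
      obtain ⟨ε, h1, h2, h3⟩ := ih (zoom j p)
      have h4 : ε ≤ 200000 := h2.trans (div_le_self (by norm_num) (one_le_pow₀ (by norm_num)))
      refine ⟨ε / 10 ^ 8, by positivity, ?_, ?_⟩
      · rw [pow_succ ((10 : ℝ) ^ 8) n, ← div_div]
        exact div_le_div_of_nonneg_right h2 (by positivity)
      · unfold BadScale at *
        rwa [relMeasure_zoom hj h1 (by linarith)]

theorem bad_frequently (p : ℝ) : ∃ᶠ ε in nhdsWithin 0 (Ioi 0), BadScale p ε := by
  rw [frequently_iff]
  intro U hU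
  obtain ⟨u, hu, hU⟩ := mem_nhdsGT_iff_exists_Ioo_subset.mp hU
  have hu : 0 < u := hu
  obtain ⟨n, hn⟩ := pow_unbounded_of_one_lt (200000 / u) (show (1 : ℝ) < 10 ^ 8 by norm_num)
  obtain ⟨ε, h1, h2, h3⟩ := bad_small n p
  refine ⟨ε, hU ⟨h1, lt_of_le_of_lt h2 ?_⟩, h3⟩
  rw [div_lt_iff₀ hu] at hn
  rw [div_lt_iff₀ (by positivity)]
  linarith

/-- If `0 ≤ δ ≤ 1/2` and `(2δ)³ + (2δ)² + 2δ > 1`, then there is a nontrivial measurable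
set `S ⊆ ℝ` having no `δ`-exceptional point. -/
theorem exists_set_without_exceptional_point (δ : ℝ) (hδ0 : 0 ≤ δ) (hδ1 : δ ≤ 1 / 2)
    (hcubic : (2 * δ) ^ 3 + (2 * δ) ^ 2 + 2 * δ > 1) :
    ∃ S : Set ℝ, MeasurableSet S ∧ NontrivialSet S ∧
      ∀ p : ℝ, ¬ IsExceptionalPoint S δ p := by
  have hc : 2718 / 10000 < δ := by
    by_contra h
    push Not at h
    have h2 : δ ^ 2 ≤ (2718 / 10000) ^ 2 := pow_le_pow_left₀ hδ0 h 2
    have h3 : δ ^ 3 ≤ (2718 / 10000) ^ 3 := pow_le_pow_left₀ hδ0 h 3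
    norm_num at h2 h3
    nlinarith
  refine ⟨fractal, fractal_measurable, ⟨?_, ?_⟩, ?_⟩
  · refine lt_of_lt_of_le ?_ (measure_mono (fun x (hx : x ∈ Iio (-200000 : ℝ)) =>
      fractal_neg (le_of_lt hx)))
    rw [Real.volume_Iio]
    exact ENNReal.zero_lt_top
  · refine lt_of_lt_of_le ?_ (measure_mono (fun x (hx : x ∈ Ioi (200000 : ℝ)) =>
      fractal_pos (le_of_lt hx)))
    rw [Real.volume_Ioi]
    exact ENNReal.zero_lt_top
  · rintro p ⟨h1, h2⟩
    have hpos : ∀ᶠ ε : ℝ in nhdsWithin 0 (Ioi 0), 0 < ε := self_mem_nhdsWithin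
    have hb1 : IsBoundedUnder (· ≥ ·) (nhdsWithin 0 (Ioi 0))
        (fun ε => relMeasure fractal p ε) :=
      ⟨0, by
        rw [eventually_map]
        exact hpos.mono fun ε hε => relMeasure_nonneg hε⟩
    have hb2 : IsBoundedUnder (· ≤ ·) (nhdsWithin 0 (Ioi 0))
        (fun ε => relMeasure fractal p ε) :=
      ⟨1, by
        rw [eventually_map]
        exact hpos.mono fun ε hε => relMeasure_le_one hε⟩
    have e1 := eventually_lt_of_lt_liminf (lt_of_lt_of_le hc h1) hb1
    have e2 := eventually_lt_of_limsup_lt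
      (lt_of_le_of_lt h2 (show 1 - δ < 1 - 2718 / 10000 by linarith)) hb2
    obtain ⟨ε, hbad, h3, h4⟩ := ((bad_frequently p).and_eventually (e1.and e2)).exists
    rcases hbad with h | h <;> linarith
end

section
/- Let 0 ≤ δ < 1/2 and suppose S ⊆ ℝ is a nontrivial measurable set having no δ-exceptional point. Then for every τ > 0 there exists a configuration C such that for every endpoint c of C there is a radius ω > 0 with λ(C|I_ω(c)) ∉ [δ+τ, 1−δ−τ]. -/
open MeasureTheory Set Filter

/-- A configuration: a finite increasing sequence `0 < a 0 < b 0 < a 1 < ⋯ < a (r-1) < b (r-1)`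
of positive reals. -/
structure Config where
  r : ℕ
  hr : 0 < r
  a : Fin r → ℝ
  b : Fin r → ℝ
  ha : ∀ i, 0 < a i
  hab : ∀ i, a i < b i
  hba : ∀ i j : Fin r, i < j → b i < a j

/-- The set `C = (-∞,0) ∪ ⋃ i (a i, b i)` associated to a configuration. -/
def Config.carrier (C : Config) : Set ℝ := Iio 0 ∪ ⋃ i, Ioo (C.a i) (C.b i)

/-- The endpoints of a configuration: `0` together with all the `a i` and `b i`. -/
def Config.endpoints (C : Config) : Set ℝ := insert 0 (range C.a ∪ range C.b)

/-- Bounded intersections have real measure at most the length. -/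
lemma cx_real_le (A : Set ℝ) (u v : ℝ) (huv : u ≤ v) :
    volume.real (A ∩ Ico u v) ≤ v - u := by
  have h := measureReal_mono (μ := volume) (inter_subset_right : A ∩ Ico u v ⊆ Ico u v)
    (by simp)
  simpa [Real.volume_real_Ico_of_le huv] using h

lemma cx_split (A : Set ℝ) (hA : MeasurableSet A) (u v : ℝ) (hu : 0 ≤ u) (huv : u ≤ v) :
    volume.real (A ∩ Ico 0 v) = volume.real (A ∩ Ico 0 u) + volume.real (A ∩ Ico u v) := by
  rw [← measureReal_union ?_ ?_ ?_ ?_]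
  · rw [← inter_union_distrib_left, Ico_union_Ico_eq_Ico hu huv]
  · refine Disjoint.mono inter_subset_right inter_subset_right ?_
    rw [Set.disjoint_left]; intro x hx hx'; exact absurd hx.2 (not_lt.2 hx'.1)
  · exact hA.inter measurableSet_Ico
  · exact ((measure_mono inter_subset_right).trans_lt (by simp)).ne
  · exact ((measure_mono inter_subset_right).trans_lt (by simp)).ne

lemma cx_Ioo_Ico (A : Set ℝ) (u v : ℝ) :
    volume.real (A ∩ Ioo u v) = volume.real (A ∩ Ico u v) := by
  apply measureReal_congr
  exact (ae_eq_refl A).inter Ioo_ae_eq_Ico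

lemma cx_lip (A : Set ℝ) (u v u' v' : ℝ) :
    volume.real (A ∩ Ioo u v) ≤ volume.real (A ∩ Ioo u' v') + |u' - u| + |v' - v| := by
  have hsub : A ∩ Ioo u v ⊆ ((A ∩ Ioo u' v') ∪ uIcc u u') ∪ uIcc v v' := by
    rintro x ⟨hxA, hx1, hx2⟩
    by_cases h1 : u' < x
    · by_cases h2 : x < v'
      · exact Or.inl (Or.inl ⟨hxA, h1, h2⟩)
      · exact Or.inr (mem_uIcc.2 (Or.inr ⟨not_lt.1 h2, hx2.le⟩))
    · exact Or.inl (Or.inr (mem_uIcc.2 (Or.inl ⟨hx1.le, not_lt.1 h1⟩)))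
  have hfin : volume (((A ∩ Ioo u' v') ∪ uIcc u u') ∪ uIcc v v') ≠ ⊤ := by
    refine measure_union_ne_top (measure_union_ne_top ?_ ?_) ?_
    · exact ((measure_mono inter_subset_right).trans_lt (by simp)).ne
    · simp [Real.volume_interval]
    · simp [Real.volume_interval]
  have h1 := measureReal_mono hsub hfin
  have h2 := measureReal_union_le (μ := volume) ((A ∩ Ioo u' v') ∪ uIcc u u') (uIcc v v')
  have h3 := measureReal_union_le (μ := volume) (A ∩ Ioo u' v') (uIcc u u')
  have e1 : volume.real (uIcc u u') = |u' - u| := by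
    simp [measureReal_def, Real.volume_interval]
  have e2 : volume.real (uIcc v v') = |v' - v| := by
    simp [measureReal_def, Real.volume_interval]
  linarith

lemma cx_cont (A : Set ℝ) (ω : ℝ) : Continuous (fun t => relMeasure A t ω) := by
  unfold relMeasure
  apply Continuous.div_const
  have : LipschitzWith 2 (fun t => volume.real (A ∩ Ioo (t - ω) (t + ω))) := by
    apply LipschitzWith.of_le_add_mul
    intro s t
    have := cx_lip A (s - ω) (s + ω) (t - ω) (t + ω)
    have e1 : t - ω - (s - ω) = t - s := by ring
    have e2 : t + ω - (s + ω) = t - s := by ring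
    rw [e1, e2] at this
    rw [Real.dist_eq, abs_sub_comm s t]
    simp only [NNReal.coe_ofNat]
    linarith
  exact this.continuous

/-- Cumulative comparison gives interval comparison. -/
lemma cx_interval (F A : Set ℝ) (hF : MeasurableSet F) (hA : MeasurableSet A) (L e : ℝ)
    (hL : 0 < L) (hFL : F ⊆ Ioo 0 L) (hAL : A ⊆ Ioo 0 L)
    (h : ∀ t ∈ Icc 0 L, |volume.real (F ∩ Ico 0 t) - volume.real (A ∩ Ico 0 t)| ≤ e)
    (u v : ℝ) (huv : u ≤ v) :
    |volume.real ((Iio 0 ∪ F) ∩ Ioo u v) - volume.real ((Iio 0 ∪ A) ∩ Ioo u v)| ≤ 2 * e := by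
  set u' := max 0 (min u L) with hu'
  set v' := max 0 (min v L) with hv'
  have hu0 : 0 ≤ u' := le_max_left _ _
  have huL : u' ≤ L := max_le hL.le (min_le_right _ _)
  have hv0 : 0 ≤ v' := le_max_left _ _
  have hvL : v' ≤ L := max_le hL.le (min_le_right _ _)
  have huv' : u' ≤ v' := max_le_max le_rfl (min_le_min huv le_rfl)
  have key : ∀ B : Set ℝ, MeasurableSet B → B ⊆ Ioo 0 L →
      volume.real ((Iio 0 ∪ B) ∩ Ioo u v) = volume.real (Iio 0 ∩ Ioo u v) +
        (volume.real (B ∩ Ico 0 v') - volume.real (B ∩ Ico 0 u')) := by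
    intro B hB hBL
    have e1 : B ∩ Ioo u v = B ∩ Ioo u' v' := by
      ext x
      constructor
      · rintro ⟨hx, h1, h2⟩
        have := hBL hx
        exact ⟨hx, max_lt this.1 ((min_le_left _ _).trans_lt h1),
          lt_max_of_lt_right (lt_min h2 this.2)⟩
      · rintro ⟨hx, h1, h2⟩
        have := hBL hx
        refine ⟨hx, ?_, ?_⟩
        · have := (le_max_right 0 (min u L)).trans_lt h1
          rcases min_lt_iff.1 this with h | h
          · exact h
          · linarith [(hBL hx).2]
        · rcases lt_max_iff.1 h2 with h | h
          · linarith [(hBL hx).1]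
          · exact h.trans_le (min_le_left _ _)
    rw [union_inter_distrib_right, measureReal_union ?_ ?_ ?_ ?_]
    · rw [e1, cx_Ioo_Ico B u' v', cx_split B hB u' v' hu0 huv']; ring
    · rw [Set.disjoint_left]; rintro x ⟨hx, -⟩ ⟨hx', -⟩
      exact absurd hx (not_lt.2 (hBL hx').1.le)
    · exact hB.inter measurableSet_Ioo
    · exact ((measure_mono inter_subset_right).trans_lt (by simp)).ne
    · exact ((measure_mono inter_subset_right).trans_lt (by simp)).ne
  rw [key F hF hFL, key A hA hAL]
  have h1 := abs_le.1 (h u' ⟨hu0, huL⟩)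
  have h2 := abs_le.1 (h v' ⟨hv0, hvL⟩)
  rw [abs_le]; constructor <;> linarith [h1.1, h1.2, h2.1, h2.2]

/-- Approximation of a set by a configuration in the sense of interval measures. -/
lemma cx_config (A : Set ℝ) (hA : MeasurableSet A) (L e : ℝ) (hL : 0 < L) (he : 0 < e)
    (hAL : A ⊆ Ioo 0 L) :
    ∃ C : Config, (∀ c ∈ C.endpoints, c ∈ Icc 0 L) ∧ ∀ u v : ℝ, u ≤ v →
      |volume.real (C.carrier ∩ Ioo u v) - volume.real ((Iio 0 ∪ A) ∩ Ioo u v)| ≤ e := by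
  obtain ⟨N, hN⟩ := exists_nat_gt (6 * L / e)
  have hNpos : (0 : ℝ) < N := lt_trans (by positivity) hN
  have hN0 : 0 < N := by exact_mod_cast hNpos
  have hN1 : (1 : ℝ) ≤ N := by exact_mod_cast hN0
  obtain ⟨h, hh⟩ : ∃ h : ℝ, h = L / N := ⟨_, rfl⟩
  have hhpos : 0 < h := by rw [hh]; positivity
  have hNh : N * h = L := by rw [hh]; field_simp
  have h6 : 6 * h ≤ e := by
    rw [div_lt_iff₀ he] at hN
    rw [hh, ← mul_div_assoc, div_le_iff₀ hNpos]; linarith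
  obtain ⟨s, hs⟩ : ∃ s : ℝ, s = 1 / N := ⟨_, rfl⟩
  have hspos : 0 < s := by rw [hs]; positivity
  have hs1 : s ≤ 1 := by rw [hs, div_le_one hNpos]; exact hN1
  have hNs : N * s = 1 := by rw [hs]; field_simp
  obtain ⟨m, hm⟩ : ∃ m : ℕ → ℝ, m = fun k : ℕ => volume.real (A ∩ Ico (k * h) ((k + 1 : ℕ) * h)) :=
    ⟨_, rfl⟩
  have hm0 : ∀ k, 0 ≤ m k := fun k => by rw [hm]; exact measureReal_nonneg
  have hmh : ∀ k, m k ≤ h := fun k => by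
    rw [hm]
    have := cx_real_le A (k * h) ((k + 1 : ℕ) * h) (by push_cast; nlinarith)
    push_cast at this ⊢
    linarith
  have hsh : 0 < s * h := by positivity
  obtain ⟨ℓ, hℓ⟩ : ∃ ℓ : ℕ → ℝ, ℓ = fun k => (1 - s) * m k + s * h / 2 := ⟨_, rfl⟩
  have hℓ0 : ∀ k, 0 < ℓ k := fun k => by
    rw [hℓ]; have := mul_nonneg (sub_nonneg.2 hs1) (hm0 k); simp only; linarith
  have hℓh : ∀ k, ℓ k ≤ h - s * h / 2 := fun k => by
    rw [hℓ]; have := mul_le_mul_of_nonneg_left (hmh k) (sub_nonneg.2 hs1); simp only; linarith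
  have hℓm : ∀ k, |ℓ k - m k| ≤ s * h := fun k => by
    rw [hℓ, abs_le]
    have h1 := mul_le_mul_of_nonneg_left (hmh k) hspos.le
    have h2 := mul_nonneg hspos.le (hm0 k)
    simp only
    constructor <;> linarith
  obtain ⟨a, ha⟩ : ∃ a : ℕ → ℝ, a = fun k : ℕ => k * h + s * h / 4 := ⟨_, rfl⟩
  obtain ⟨b, hb⟩ : ∃ b : ℕ → ℝ, b = fun k : ℕ => a k + ℓ k := ⟨_, rfl⟩
  have hax : ∀ k : ℕ, (k : ℝ) * h < a k := fun k => by rw [ha]; simp only; linarith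
  have hab : ∀ k, a k < b k := fun k => by rw [hb]; linarith [hℓ0 k]
  have hbx : ∀ k : ℕ, b k < ((k + 1 : ℕ) : ℝ) * h := fun k => by
    rw [hb, ha]; push_cast; linarith [hℓh k]
  have hmono : ∀ i j : ℕ, i ≤ j → (i : ℝ) * h ≤ j * h := fun i j hij =>
    mul_le_mul_of_nonneg_right (by exact_mod_cast hij) hhpos.le
  have hk0 : ∀ k : ℕ, (0 : ℝ) ≤ k * h := fun k => by positivity
  let C : Config :=
    { r := N, hr := hN0, a := fun i => a i, b := fun i => b i
      ha := fun i => (hk0 i).trans_lt (hax i)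
      hab := fun i => hab i
      hba := fun i j hij => (hbx i).trans_le ((hmono _ _ hij).trans (hax j).le) }
  have hbL : ∀ i : Fin N, b i ≤ L := fun i =>
    (hbx i).le.trans ((hmono _ _ i.2).trans hNh.le)
  refine ⟨C, ?_, ?_⟩
  · rintro c (rfl | ⟨i, rfl⟩ | ⟨i, rfl⟩)
    · exact ⟨le_rfl, hL.le⟩
    · exact ⟨(C.ha i).le, (hab i).le.trans (hbL i)⟩
    · exact ⟨((C.ha i).trans (C.hab i)).le, hbL i⟩
  obtain ⟨F, hF⟩ : ∃ F : Set ℝ, F = ⋃ i : Fin N, Ioo (a i) (b i) := ⟨_, rfl⟩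
  have hC : C.carrier = Iio 0 ∪ F := by rw [hF]; rfl
  have hFm : MeasurableSet F := by rw [hF]; exact MeasurableSet.iUnion fun i => measurableSet_Ioo
  have hFL : F ⊆ Ioo 0 L := by
    rw [hF]; refine iUnion_subset fun i x hx => ?_
    exact ⟨(C.ha i).trans hx.1, hx.2.trans_le (hbL i)⟩
  have hcell : ∀ k, k < N → F ∩ Ico (k * h) ((k + 1 : ℕ) * h) = Ioo (a k) (b k) := by
    intro k hk
    ext x
    constructor
    · rintro ⟨hxF, hx1, hx2⟩
      rw [hF] at hxF
      obtain ⟨i, hi1, hi2⟩ := mem_iUnion.1 hxF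
      have hik : (i : ℕ) = k := by
        rcases lt_trichotomy (i : ℕ) k with hlt | heq | hgt
        · have := hmono _ _ (Nat.succ_le_of_lt hlt)
          have h2 := hbx i
          exact absurd hx1 (not_le.2 (by simp only [Nat.succ_eq_add_one] at this; linarith))
        · exact heq
        · have := hmono _ _ (Nat.succ_le_of_lt hgt)
          have h2 := hax i
          exact absurd hx2 (not_lt.2 (by simp only [Nat.succ_eq_add_one] at this; linarith))
      rw [hik] at hi1 hi2
      exact ⟨hi1, hi2⟩
    · intro hx
      refine ⟨?_, (hax k).le.trans hx.1.le, hx.2.trans (hbx k)⟩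
      rw [hF]
      exact mem_iUnion.2 ⟨⟨k, hk⟩, hx⟩
  have hgrid : ∀ k, k ≤ N →
      |volume.real (F ∩ Ico 0 (k * h)) - volume.real (A ∩ Ico 0 (k * h))| ≤ k * (s * h) := by
    intro k
    induction k with
    | zero => intro _; simp
    | succ k ih =>
      intro hk
      have ih' := ih (by omega)
      rw [cx_split F hFm (k * h) ((k + 1 : ℕ) * h) (hk0 k) (hmono _ _ (Nat.le_succ k)),
        cx_split A hA (k * h) ((k + 1 : ℕ) * h) (hk0 k) (hmono _ _ (Nat.le_succ k)),
        hcell k hk, Real.volume_real_Ioo_of_le (hab k).le]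
      have e1 : b k - a k = ℓ k := by rw [hb]; ring
      have e2 : volume.real (A ∩ Ico (k * h) ((k + 1 : ℕ) * h)) = m k := by rw [hm]
      rw [e1, e2]
      have h3 := abs_le.1 (hℓm k)
      have h4 := abs_le.1 ih'
      push_cast
      rw [abs_le]
      constructor <;> linarith [h3.1, h3.2, h4.1, h4.2]
  have hall : ∀ t ∈ Icc 0 L, |volume.real (F ∩ Ico 0 t) - volume.real (A ∩ Ico 0 t)| ≤ 3 * h := by
    intro t ht
    have hth : 0 ≤ t / h := div_nonneg ht.1 hhpos.le
    obtain ⟨k, hk⟩ : ∃ k : ℕ, k = ⌊t / h⌋₊ := ⟨_, rfl⟩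
    have hk1 : (k : ℝ) * h ≤ t := by
      rw [← le_div_iff₀ hhpos, hk]; exact Nat.floor_le hth
    have hk2 : t < (k + 1) * h := by
      rw [← div_lt_iff₀ hhpos, hk]; exact Nat.lt_floor_add_one _
    have hkN : k ≤ N := by
      have : (k : ℝ) * h ≤ N * h := by rw [hNh]; exact hk1.trans ht.2
      exact_mod_cast le_of_mul_le_mul_right this hhpos
    rw [cx_split F hFm (k * h) t (hk0 k) hk1, cx_split A hA (k * h) t (hk0 k) hk1]
    have g := hgrid k hkN
    have gb : (k : ℝ) * (s * h) ≤ h := by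
      have : (k : ℝ) * (s * h) ≤ N * (s * h) :=
        mul_le_mul_of_nonneg_right (by exact_mod_cast hkN) hsh.le
      rw [← mul_assoc (N : ℝ), hNs, one_mul] at this
      exact this
    have g1 := cx_real_le F (k * h) t hk1
    have g2 := cx_real_le A (k * h) t hk1
    have g3 : 0 ≤ volume.real (F ∩ Ico (k * h) t) := measureReal_nonneg
    have g4 : 0 ≤ volume.real (A ∩ Ico (k * h) t) := measureReal_nonneg
    have g5 := abs_le.1 g
    rw [abs_le]
    constructor <;> linarith [g5.1, g5.2]
  intro u v huv
  rw [hC]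
  refine (cx_interval F A hFm hA L (3 * h) hL hFL hAL hall u v huv).trans ?_
  linarith

lemma cx_rel_bounds (S : Set ℝ) (p ε : ℝ) (hε : 0 < ε) :
    0 ≤ relMeasure S p ε ∧ relMeasure S p ε ≤ 1 := by
  unfold relMeasure
  refine ⟨by positivity, ?_⟩
  rw [div_le_one (by positivity)]
  have h := measureReal_mono (μ := volume)
    (inter_subset_right : S ∩ Ioo (p - ε) (p + ε) ⊆ Ioo (p - ε) (p + ε)) (by simp)
  rw [Real.volume_real_Ioo_of_le (by linarith)] at h
  calc _ ≤ _ := h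
    _ = 2 * ε := by ring

lemma cx_freq (S : Set ℝ) (δ p : ℝ) (hno : ¬ IsExceptionalPoint S δ p) (η : ℝ) (hη : 0 < η) :
    ∃ ε, 0 < ε ∧ ε < η ∧ relMeasure S p ε ∉ Icc δ (1 - δ) := by
  by_contra hcon
  push Not at hcon
  apply hno
  have hev : ∀ᶠ ε in nhdsWithin (0 : ℝ) (Ioi 0), relMeasure S p ε ∈ Icc δ (1 - δ) := by
    filter_upwards [Ioo_mem_nhdsGT hη] with ε hε
    exact hcon ε hε.1 hε.2
  constructor
  · refine le_liminf_of_le ?_ (hev.mono fun _ h => h.1)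
    exact (isBoundedUnder_of_eventually_le (hev.mono fun _ h => h.2)).isCoboundedUnder_ge
  · refine limsup_le_of_le ?_ (hev.mono fun _ h => h.2)
    exact (isBoundedUnder_of_eventually_ge (hev.mono fun _ h => h.1)).isCoboundedUnder_le

lemma cx_density (S : Set ℝ) (hS : MeasurableSet S) (hpos : 0 < volume S) :
    ∃ x, Tendsto (fun ε => relMeasure S x ε) (nhdsWithin 0 (Ioi 0)) (nhds 1) := by
  have hae := Besicovitch.ae_tendsto_measure_inter_div_of_measurableSet (volume : Measure ℝ) hS
  have : ∃ x ∈ S, Tendsto (fun r => volume (S ∩ Metric.closedBall x r) /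
      volume (Metric.closedBall x r)) (nhdsWithin 0 (Ioi 0)) (nhds (S.indicator 1 x)) := by
    by_contra hcon
    push Not at hcon
    have : volume S = 0 := measure_mono_null (fun x hx => hcon x hx) hae
    exact hpos.ne' this
  obtain ⟨x, hx, ht⟩ := this
  refine ⟨x, ?_⟩
  rw [indicator_of_mem hx] at ht
  have ht2 := (ENNReal.tendsto_toReal ENNReal.one_ne_top).comp ht
  simp only [ENNReal.toReal_one] at ht2
  refine ht2.congr' ?_
  filter_upwards [self_mem_nhdsWithin] with ε hε
  have hε' : (0 : ℝ) < ε := hε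
  simp only [Function.comp, relMeasure, ENNReal.toReal_div, Real.closedBall_eq_Icc]
  rw [measure_congr ((ae_eq_refl S).inter (Ioo_ae_eq_Icc (a := x - ε) (b := x + ε)).symm)]
  rw [Real.volume_Icc, ENNReal.toReal_ofReal (by linarith)]
  congr 1; ring

lemma cx_compl (S : Set ℝ) (hS : MeasurableSet S) (p ε : ℝ) (hε : 0 < ε) :
    relMeasure Sᶜ p ε = 1 - relMeasure S p ε := by
  have h : volume.real (Ioo (p - ε) (p + ε) ∩ S) + volume.real (Ioo (p - ε) (p + ε) \ S)
      = volume.real (Ioo (p - ε) (p + ε)) :=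
    measureReal_inter_add_sdiff hS (by simp)
  rw [Real.volume_real_Ioo_of_le (by linarith), inter_comm, sdiff_eq, inter_comm _ Sᶜ] at h
  unfold relMeasure
  change volume.real (Sᶜ ∩ Ioo (p - ε) (p + ε)) / (2 * ε)
    = 1 - volume.real (S ∩ Ioo (p - ε) (p + ε)) / (2 * ε)
  field_simp
  linarith

lemma cx_translate (S : Set ℝ) (x p ε : ℝ) :
    relMeasure ((fun t => x + t) ⁻¹' S) p ε = relMeasure S (x + p) ε := by
  unfold relMeasure
  congr 2
  rw [← measure_preimage_add volume x (S ∩ Ioo (x + p - ε) (x + p + ε))]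
  congr 1
  ext t
  simp only [mem_inter_iff, mem_preimage, mem_Ioo]
  constructor <;> rintro ⟨h1, h2, h3⟩ <;> exact ⟨h1, by linarith, by linarith⟩

/-- Monotonicity of the relative measure, up to null sets. -/
lemma cx_rel_mono (S T : Set ℝ) (p ε q : ℝ) (hε : 0 < ε)
    (h : S ∩ Ioo (p - ε) (p + ε) ⊆ T ∪ {q}) : relMeasure S p ε ≤ relMeasure T p ε := by
  unfold relMeasure
  refine div_le_div_of_nonneg_right ?_ (by positivity)
  change volume.real (S ∩ Ioo (p - ε) (p + ε)) ≤ volume.real (T ∩ Ioo (p - ε) (p + ε))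
  have hsub : S ∩ Ioo (p - ε) (p + ε) ⊆ (T ∩ Ioo (p - ε) (p + ε)) ∪ {q} := by
    intro z hz
    rcases h hz with h1 | h1
    · exact Or.inl ⟨h1, hz.2⟩
    · exact Or.inr h1
  have h1 := measureReal_mono (μ := volume) hsub
    (measure_union_ne_top ((measure_mono inter_subset_right).trans_lt (by simp)).ne (by simp))
  refine (h1.trans (measureReal_union_le _ _)).trans ?_
  have h2 : volume.real ({q} : Set ℝ) = 0 := by simp [measureReal_def]
  linarith

/-- Core case: `0` is a density point of `T`, and `L > 0` is a density point of `Tᶜ`. -/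
lemma cx_core (δ : ℝ) (hδ0 : 0 ≤ δ) (T : Set ℝ) (hT : MeasurableSet T) (L : ℝ) (hL : 0 < L)
    (h0 : Tendsto (fun ε => relMeasure T 0 ε) (nhdsWithin 0 (Ioi 0)) (nhds 1))
    (h1 : Tendsto (fun ε => relMeasure T L ε) (nhdsWithin 0 (Ioi 0)) (nhds 0))
    (hno : ∀ p η : ℝ, 0 < η → ∃ ε, 0 < ε ∧ ε < η ∧ relMeasure T p ε ∉ Icc δ (1 - δ))
    (τ : ℝ) (hτ : 0 < τ) :
    ∃ C : Config, ∀ c ∈ C.endpoints, ∃ ω > 0,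
      relMeasure C.carrier c ω ∉ Icc (δ + τ) (1 - δ - τ) := by
  obtain ⟨A, hAdef⟩ : ∃ A : Set ℝ, A = T ∩ Ioo 0 L := ⟨_, rfl⟩
  have hA : MeasurableSet A := by rw [hAdef]; exact hT.inter measurableSet_Ioo
  have hAL : A ⊆ Ioo 0 L := by rw [hAdef]; exact inter_subset_right
  have hpt : ∀ t ∈ Icc 0 L, ∃ ω > 0,
      relMeasure (Iio 0 ∪ A) t ω ∉ Icc (δ + τ / 2) (1 - δ - τ / 2) := by
    intro t ht
    rcases eq_or_lt_of_le ht.1 with h | ht0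
    · subst h
      obtain ⟨ε, ⟨hε0, hεL⟩, hε⟩ := (Filter.Eventually.and (Ioo_mem_nhdsGT hL)
        (h0.eventually (lt_mem_nhds (show 1 - τ / 2 < 1 by linarith)))).exists
      refine ⟨ε, hε0, fun hmem => ?_⟩
      have := cx_rel_mono T (Iio 0 ∪ A) 0 ε 0 hε0 (by
        rintro z ⟨hz, hz1, hz2⟩
        rcases lt_trichotomy z 0 with h | h | h
        · exact Or.inl (Or.inl h)
        · exact Or.inr h
        · exact Or.inl (Or.inr (by rw [hAdef]; exact ⟨hz, h, by linarith⟩)))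
      linarith [hmem.2]
    rcases eq_or_lt_of_le ht.2 with h | htL
    · subst h
      obtain ⟨ε, ⟨hε0, hεL⟩, hε⟩ := (Filter.Eventually.and (Ioo_mem_nhdsGT hL)
        (h1.eventually (gt_mem_nhds (show 0 < τ / 2 by linarith)))).exists
      refine ⟨ε, hε0, fun hmem => ?_⟩
      have := cx_rel_mono (Iio 0 ∪ A) T t ε 0 hε0 (by
        rintro z ⟨hz | hz, hz1, hz2⟩
        · have : z < 0 := hz
          linarith
        · rw [hAdef] at hz; exact Or.inl hz.1)
      linarith [hmem.1]
    · obtain ⟨ε, hε0, hε1, hε⟩ := hno t (min t (L - t)) (lt_min ht0 (by linarith))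
      have hεt := hε1.trans_le (min_le_left _ _)
      have hεL := hε1.trans_le (min_le_right _ _)
      have e : relMeasure (Iio 0 ∪ A) t ε = relMeasure T t ε := by
        apply le_antisymm
        · refine cx_rel_mono _ _ t ε 0 hε0 ?_
          rintro z ⟨hz | hz, hz1, hz2⟩
          · have : z < 0 := hz
            linarith
          · rw [hAdef] at hz; exact Or.inl hz.1
        · refine cx_rel_mono _ _ t ε 0 hε0 ?_
          rintro z ⟨hz, hz1, hz2⟩
          exact Or.inl (Or.inr (by rw [hAdef]; exact ⟨hz, by linarith, by linarith⟩))
      refine ⟨ε, hε0, fun hmem => hε ?_⟩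
      rw [e] at hmem
      exact ⟨by linarith [hmem.1], by linarith [hmem.2]⟩
  have hunif : ∃ ω₀ > 0, ∀ t ∈ Icc 0 L, ∃ ω ≥ ω₀,
      relMeasure (Iio 0 ∪ A) t ω ∉ Icc (δ + τ / 2) (1 - δ - τ / 2) := by
    refine (isCompact_Icc (a := (0:ℝ)) (b := L)).induction_on
      (p := fun K => ∃ ω₀ > 0, ∀ t ∈ K, ∃ ω ≥ ω₀,
        relMeasure (Iio 0 ∪ A) t ω ∉ Icc (δ + τ / 2) (1 - δ - τ / 2)) ?_ ?_ ?_ ?_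
    · exact ⟨1, one_pos, fun t ht => absurd ht (notMem_empty t)⟩
    · rintro s t hst ⟨w, hw, h⟩
      exact ⟨w, hw, fun x hx => h x (hst hx)⟩
    · rintro s t ⟨w, hw, h⟩ ⟨w', hw', h'⟩
      refine ⟨min w w', lt_min hw hw', ?_⟩
      rintro x (hx | hx)
      · obtain ⟨ω, h1, h2⟩ := h x hx
        exact ⟨ω, (min_le_left _ _).trans h1, h2⟩
      · obtain ⟨ω, h1, h2⟩ := h' x hx
        exact ⟨ω, (min_le_right _ _).trans h1, h2⟩
    · intro x hx
      obtain ⟨ω, hω, h⟩ := hpt x hx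
      refine ⟨{t | relMeasure (Iio 0 ∪ A) t ω ∉ Icc (δ + τ / 2) (1 - δ - τ / 2)}, ?_,
        ω, hω, fun t ht => ⟨ω, le_rfl, ht⟩⟩
      apply mem_nhdsWithin_of_mem_nhds
      exact (isClosed_Icc.isOpen_compl.preimage (cx_cont (Iio 0 ∪ A) ω)).mem_nhds h
  obtain ⟨ω₀, hω₀, hunif⟩ := hunif
  obtain ⟨C, hC1, hC2⟩ := cx_config A hA L (τ * ω₀) hL (by positivity) hAL
  refine ⟨C, fun c hc => ?_⟩
  obtain ⟨ω, hω, h⟩ := hunif c (hC1 c hc)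
  have hωpos : 0 < ω := lt_of_lt_of_le hω₀ hω
  refine ⟨ω, hωpos, fun hmem => h ?_⟩
  have hd := hC2 (c - ω) (c + ω) (by linarith)
  have hd2 : |relMeasure C.carrier c ω - relMeasure (Iio 0 ∪ A) c ω| ≤ τ / 2 := by
    unfold relMeasure
    rw [← sub_div, abs_div, abs_of_pos (show 0 < 2 * ω by positivity),
      div_le_iff₀ (by positivity)]
    refine le_trans hd ?_
    have := mul_le_mul_of_nonneg_left hω hτ.le
    linarith
  have := abs_le.1 hd2
  exact ⟨by linarith [hmem.1], by linarith [hmem.2]⟩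

/-- The case of density points `x < y`. -/
lemma cx_case (δ : ℝ) (hδ0 : 0 ≤ δ) (S : Set ℝ) (hS : MeasurableSet S) (x y : ℝ) (hxy : x < y)
    (h0 : Tendsto (fun ε => relMeasure S x ε) (nhdsWithin 0 (Ioi 0)) (nhds 1))
    (h1 : Tendsto (fun ε => relMeasure S y ε) (nhdsWithin 0 (Ioi 0)) (nhds 0))
    (hno : ∀ p η : ℝ, 0 < η → ∃ ε, 0 < ε ∧ ε < η ∧ relMeasure S p ε ∉ Icc δ (1 - δ))
    (τ : ℝ) (hτ : 0 < τ) :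
    ∃ C : Config, ∀ c ∈ C.endpoints, ∃ ω > 0,
      relMeasure C.carrier c ω ∉ Icc (δ + τ) (1 - δ - τ) := by
  refine cx_core δ hδ0 ((fun t => x + t) ⁻¹' S) (hS.preimage (measurable_const_add x)) (y - x)
    (by linarith) ?_ ?_ ?_ τ hτ
  · simpa [cx_translate] using h0
  · simpa [cx_translate] using h1
  · intro p η hη
    simpa [cx_translate] using hno (x + p) η hη

lemma cx_tendsto_compl (S : Set ℝ) (hS : MeasurableSet S) (y a : ℝ)
    (h : Tendsto (fun ε => relMeasure S y ε) (nhdsWithin 0 (Ioi 0)) (nhds a)) :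
    Tendsto (fun ε => relMeasure Sᶜ y ε) (nhdsWithin 0 (Ioi 0)) (nhds (1 - a)) := by
  refine (tendsto_const_nhds.sub h).congr' ?_
  filter_upwards [self_mem_nhdsWithin] with ε hε
  exact (cx_compl S hS y ε hε).symm

/-- If `0 ≤ δ < 1/2` and `S` is a nontrivial measurable set with no `δ`-exceptional point,
then for every `τ > 0` there is a configuration `C` such that every endpoint `c` of `C`
admits a radius `ω > 0` with `λ(C | I_ω(c)) ∉ [δ+τ, 1-δ-τ]`. -/
theorem exists_counterexample_config_of_no_exceptional_point
    (δ : ℝ) (hδ0 : 0 ≤ δ) (hδ1 : δ < 1 / 2)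
    (S : Set ℝ) (hS : MeasurableSet S) (hnt : NontrivialSet S)
    (hno : ∀ p : ℝ, ¬ IsExceptionalPoint S δ p)
    (τ : ℝ) (hτ : 0 < τ) :
    ∃ C : Config, ∀ c ∈ C.endpoints, ∃ ω > 0,
      relMeasure C.carrier c ω ∉ Icc (δ + τ) (1 - δ - τ) := by
  have hfr : ∀ p η : ℝ, 0 < η → ∃ ε, 0 < ε ∧ ε < η ∧ relMeasure S p ε ∉ Icc δ (1 - δ) :=
    fun p η hη => cx_freq S δ p (hno p) η hη
  obtain ⟨x, hx⟩ := cx_density S hS hnt.1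
  obtain ⟨y, hy⟩ := cx_density Sᶜ hS.compl hnt.2
  have hy' : Tendsto (fun ε => relMeasure S y ε) (nhdsWithin 0 (Ioi 0)) (nhds 0) := by
    simpa using cx_tendsto_compl Sᶜ hS.compl y 1 hy
  have hx' : Tendsto (fun ε => relMeasure Sᶜ x ε) (nhdsWithin 0 (Ioi 0)) (nhds 0) := by
    simpa using cx_tendsto_compl S hS x 1 hx
  rcases lt_trichotomy x y with hlt | heq | hgt
  · exact cx_case δ hδ0 S hS x y hlt hx hy' hfr τ hτ
  · subst heq
    exact absurd (tendsto_nhds_unique hx hy') one_ne_zero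
  · refine cx_case δ hδ0 Sᶜ hS.compl y x hgt hy hx' ?_ τ hτ
    intro p η hη
    obtain ⟨ε, h1, h2, h3⟩ := hfr p η hη
    refine ⟨ε, h1, h2, fun hmem => h3 ?_⟩
    rw [cx_compl S hS p ε h1] at hmem
    exact ⟨by linarith [hmem.2], by linarith [hmem.1]⟩
end

section
/- Let 0 ≤ δ < 1/2 and suppose C is a configuration such that for every endpoint c of C there is a radius ω > 0 with λ(C|I_ω(c)) ∉ [δ, 1−δ]. Then for every τ > 0 there exists a nontrivial measurable set S ⊆ ℝ that has no (δ+τ)-exceptional point. -/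
open MeasureTheory Set Filter

namespace ExcAux

/-- approximations of the self-similar set -/
def approx (C : Set ℝ) (E : Finset ℝ) (s : ℝ → ℝ) (ρ η : ℝ) : ℕ → Set ℝ
  | 0 => ∅
  | n + 1 => {x | x ∈ C ∧ ∀ c ∈ E, ρ ≤ |x - c|} ∪
      ⋃ c ∈ E, {x | |x - c| < ρ} ∩ (fun x => s c / η * (x + -c)) ⁻¹' (approx C E s ρ η n)

/-- the self-similar set -/
def lim (C : Set ℝ) (E : Finset ℝ) (s : ℝ → ℝ) (ρ η : ℝ) : Set ℝ :=
  ⋃ n, approx C E s ρ η n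

lemma approx_meas {C : Set ℝ} (hC : MeasurableSet C) (E : Finset ℝ) (s : ℝ → ℝ) (ρ η : ℝ) (n : ℕ) :
    MeasurableSet (approx C E s ρ η n) := by
  induction n with
  | zero => exact MeasurableSet.empty
  | succ n ih =>
    unfold approx
    refine MeasurableSet.union ?_ ?_
    · have : {x | x ∈ C ∧ ∀ c ∈ E, ρ ≤ |x - c|} = C ∩ ⋂ c ∈ E, {x | ρ ≤ |x - c|} := by
        ext x; simp
      rw [this]
      refine hC.inter (Finset.measurableSet_biInter _ fun c _ => ?_)
      exact measurableSet_le measurable_const (by fun_prop)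
    · refine Finset.measurableSet_biUnion _ fun c _ => ?_
      refine MeasurableSet.inter (measurableSet_lt (by fun_prop) measurable_const) ?_
      exact ih.preimage (by fun_prop)

lemma lim_meas {C : Set ℝ} (hC : MeasurableSet C) (E : Finset ℝ) (s : ℝ → ℝ) (ρ η : ℝ) :
    MeasurableSet (lim C E s ρ η) := MeasurableSet.iUnion fun n => approx_meas hC E s ρ η n

lemma mem_lim {C : Set ℝ} {E : Finset ℝ} {s : ℝ → ℝ} {ρ η : ℝ} (x : ℝ) :
    x ∈ lim C E s ρ η ↔ (x ∈ C ∧ ∀ c ∈ E, ρ ≤ |x - c|) ∨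
      ∃ c ∈ E, |x - c| < ρ ∧ s c / η * (x + -c) ∈ lim C E s ρ η := by
  constructor
  · intro h
    obtain ⟨n, hn⟩ := mem_iUnion.1 h
    cases n with
    | zero => exact absurd hn (by simp [approx])
    | succ n =>
      rcases hn with hn | hn
      · exact Or.inl hn
      · simp only [mem_iUnion] at hn
        obtain ⟨c, hc, h1, h2⟩ := hn
        exact Or.inr ⟨c, hc, h1, mem_iUnion.2 ⟨n, h2⟩⟩
  · rintro (h | ⟨c, hc, h1, h2⟩)
    · exact mem_iUnion.2 ⟨1, Or.inl h⟩
    · obtain ⟨n, hn⟩ := mem_iUnion.1 h2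
      refine mem_iUnion.2 ⟨n + 1, Or.inr ?_⟩
      simp only [mem_iUnion]
      exact ⟨c, hc, h1, hn⟩

lemma lim_out {C : Set ℝ} {E : Finset ℝ} {s : ℝ → ℝ} {ρ η : ℝ} {x : ℝ}
    (h : ∀ c ∈ E, ρ ≤ |x - c|) : x ∈ lim C E s ρ η ↔ x ∈ C := by
  rw [mem_lim]
  constructor
  · rintro (h1 | ⟨c, hc, h1, h2⟩)
    · exact h1.1
    · exact absurd h1 (not_lt.2 (h c hc))
  · intro h1; exact Or.inl ⟨h1, h⟩

lemma lim_in {C : Set ℝ} {E : Finset ℝ} {s : ℝ → ℝ} {ρ η : ℝ}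
    (hsep : ∀ c ∈ E, ∀ d ∈ E, c ≠ d → 2 * ρ ≤ |c - d|) {x c : ℝ} (hc : c ∈ E)
    (h : |x - c| < ρ) : x ∈ lim C E s ρ η ↔ s c / η * (x + -c) ∈ lim C E s ρ η := by
  conv_lhs => rw [mem_lim]
  constructor
  · rintro (h1 | ⟨d, hd, h1, h2⟩)
    · exact absurd h (not_lt.2 (h1.2 c hc))
    · by_cases hcd : c = d
      · rwa [hcd]
      · have := hsep c hc d hd hcd
        have h3 : |c - d| ≤ |x - c| + |x - d| := by
          rw [abs_sub_comm x c]; exact abs_sub_le c x d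
        linarith
  · intro h1; exact Or.inr ⟨c, hc, h, h1⟩

lemma lim_far {C : Set ℝ} {E : Finset ℝ} {s : ℝ → ℝ} {ρ η M : ℝ} (hη : 0 < η) (hρ1 : ρ ≤ 1)
    (hsep : ∀ c ∈ E, ∀ d ∈ E, c ≠ d → 2 * ρ ≤ |c - d|)
    (hs : ∀ c, |s c| = 1)
    (hloc : ∀ c ∈ E, ∀ x, |x - c| < ρ → x ≠ c → (x ∈ C ↔ s c * (x - c) < 0))
    (hM : ∀ c ∈ E, |c| ≤ M) (hMC : ∀ x, M < |x| → (x ∈ C ↔ x < 0)) {x : ℝ}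
    (hx : ∀ c ∈ E, (M + 1) * η < |x - c|) : x ∈ lim C E s ρ η ↔ x ∈ C := by
  by_cases h : ∀ c ∈ E, ρ ≤ |x - c|
  · exact lim_out h
  push Not at h
  obtain ⟨c, hc, h⟩ := h
  have hM0 : 0 ≤ M := (abs_nonneg c).trans (hM c hc)
  have hxc := hx c hc
  have hne : x ≠ c := by
    rintro rfl
    simp at hxc
    nlinarith
  rw [lim_in hsep hc h, hloc c hc x h hne]
  set y := s c / η * (x + -c) with hy
  have hyabs : |y| = |x - c| / η := by
    rw [hy, abs_mul, abs_div, hs, abs_of_pos hη, ← sub_eq_add_neg]; ring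
  have hyM : M + 1 < |y| := by rw [hyabs, lt_div_iff₀ hη]; exact hxc
  rw [lim_out, hMC y (by linarith)]
  · have : y = (s c * (x - c)) / η := by rw [hy]; ring
    rw [this, div_lt_iff₀ hη, zero_mul]
  · intro d hd
    have := hM d hd
    have := abs_sub_abs_le_abs_sub y d
    linarith

lemma rel_scale {C : Set ℝ} {E : Finset ℝ} {s : ℝ → ℝ} {ρ η : ℝ} (hη : 0 < η)
    (hsep : ∀ c ∈ E, ∀ d ∈ E, c ≠ d → 2 * ρ ≤ |c - d|)
    (hs : ∀ c, |s c| = 1) {c x ε : ℝ} (hc : c ∈ E) (hε : 0 < ε) (h : |x - c| + ε ≤ ρ) :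
    relMeasure (lim C E s ρ η) (s c / η * (x + -c)) (ε / η) = relMeasure (lim C E s ρ η) x ε := by
  set T := lim C E s ρ η
  set A := T ∩ Ioo (s c / η * (x + -c) - ε / η) (s c / η * (x + -c) + ε / η) with hA
  have key : T ∩ Ioo (x - ε) (x + ε) = (fun y => y + -c) ⁻¹' ((fun y => s c / η * y) ⁻¹' A) := by
    ext y
    simp only [hA, mem_inter_iff, mem_preimage]
    have e1 : y ∈ Ioo (x - ε) (x + ε) ↔ |y - x| < ε := by
      rw [abs_lt, mem_Ioo]; constructor <;> rintro ⟨h1, h2⟩ <;> constructor <;> linarith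
    have e2 : s c / η * (y + -c) ∈ Ioo (s c / η * (x + -c) - ε / η) (s c / η * (x + -c) + ε / η)
        ↔ |y - x| < ε := by
      have : |y - x| / η = |s c / η * (y + -c) - s c / η * (x + -c)| := by
        rw [← mul_sub, abs_mul, abs_div, hs, abs_of_pos hη]
        have : y + -c - (x + -c) = y - x := by ring
        rw [this]; ring
      rw [← div_lt_div_iff_of_pos_right hη, this, abs_lt, mem_Ioo]
      constructor <;> rintro ⟨h1, h2⟩ <;> constructor <;> linarith
    rw [e1, e2]
    refine and_congr_left fun hyx => lim_in hsep hc ?_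
    have := abs_sub_le y x c
    linarith
  unfold relMeasure
  rw [key, measure_preimage_add_right, Real.volume_preimage_mul_left]
  · rw [ENNReal.toReal_mul, ENNReal.toReal_ofReal (abs_nonneg _), inv_div, abs_div, hs,
      abs_of_pos hη, ← hA]
    generalize (volume A).toReal = v
    field_simp
  · have : s c ≠ 0 := by intro h0; have := hs c; rw [h0] at this; simp at this
    exact div_ne_zero this hη.ne'

lemma vol_fin (S : Set ℝ) (a b : ℝ) : volume (S ∩ Ioo a b) ≠ ⊤ :=
  measure_ne_top_of_subset inter_subset_right (by simp)

lemma rel_nonneg (S : Set ℝ) (x : ℝ) {ε : ℝ} (hε : 0 < ε) : 0 ≤ relMeasure S x ε := by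
  unfold relMeasure; positivity

lemma rel_le_one (S : Set ℝ) (x : ℝ) {ε : ℝ} (hε : 0 < ε) : relMeasure S x ε ≤ 1 := by
  unfold relMeasure
  rw [div_le_one (by positivity)]
  calc (volume (S ∩ Ioo (x - ε) (x + ε))).toReal ≤ (volume (Ioo (x - ε) (x + ε))).toReal :=
        ENNReal.toReal_mono (by simp) (measure_mono inter_subset_right)
    _ = 2 * ε := by
        rw [Real.volume_Ioo, ENNReal.toReal_ofReal (by linarith)]; ring

/-- perturbation bound -/
lemma vol_pert (S T : Set ℝ) (E : Finset ℝ) (κ ω x y : ℝ) (hκ : 0 ≤ κ) (hxy : |x - y| ≤ κ)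
    (h : ∀ z, (∀ c ∈ E, κ < |z - c|) → (z ∈ S → z ∈ T)) :
    (volume (S ∩ Ioo (x - ω) (x + ω))).toReal ≤
      (volume (T ∩ Ioo (y - ω) (y + ω))).toReal + (E.card + 2) * (2 * κ) := by
  have hsub : S ∩ Ioo (x - ω) (x + ω) ⊆ (T ∩ Ioo (y - ω) (y + ω)) ∪
      ((⋃ c ∈ E, Metric.closedBall c κ) ∪
        (Metric.closedBall (y - ω) κ ∪ Metric.closedBall (y + ω) κ)) := by
    rintro z ⟨hz, hz1, hz2⟩
    rw [abs_le] at hxy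
    by_cases h1 : ∀ c ∈ E, κ < |z - c|
    · have hT := h z h1 hz
      by_cases h2 : y - ω < z
      · by_cases h3 : z < y + ω
        · exact Or.inl ⟨hT, h2, h3⟩
        · right; right; right
          rw [Metric.mem_closedBall, Real.dist_eq, abs_le]
          constructor <;> linarith
      · right; right; left
        rw [Metric.mem_closedBall, Real.dist_eq, abs_le]
        constructor <;> linarith
    · right; left
      push Not at h1
      obtain ⟨c, hc, h1⟩ := h1
      simp only [mem_iUnion]
      exact ⟨c, hc, by rwa [Metric.mem_closedBall, Real.dist_eq]⟩
  have hb : volume ((⋃ c ∈ E, Metric.closedBall c κ) ∪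
        (Metric.closedBall (y - ω) κ ∪ Metric.closedBall (y + ω) κ)) ≤
        ENNReal.ofReal ((E.card + 2) * (2 * κ)) := by
    calc _ ≤ volume (⋃ c ∈ E, Metric.closedBall c κ) +
        (volume (Metric.closedBall (y - ω) κ) + volume (Metric.closedBall (y + ω) κ)) :=
          (measure_union_le _ _).trans (add_le_add le_rfl (measure_union_le _ _))
      _ ≤ (∑ c ∈ E, volume (Metric.closedBall c κ)) +
        (volume (Metric.closedBall (y - ω) κ) + volume (Metric.closedBall (y + ω) κ)) :=
          add_le_add (measure_biUnion_finset_le _ _) le_rfl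
      _ = _ := by
        simp only [Real.volume_closedBall, Finset.sum_const, nsmul_eq_mul]
        rw [← ENNReal.ofReal_add (by positivity) (by positivity), ← ENNReal.ofReal_natCast,
          ← ENNReal.ofReal_mul (by positivity), ← ENNReal.ofReal_add (by positivity) (by positivity)]
        congr 1; ring
  have h1 : volume (S ∩ Ioo (x - ω) (x + ω)) ≤ volume (T ∩ Ioo (y - ω) (y + ω)) +
      ENNReal.ofReal ((E.card + 2) * (2 * κ)) :=
    (measure_mono hsub).trans ((measure_union_le _ _).trans (add_le_add le_rfl hb))
  have h2 := ENNReal.toReal_mono (by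
    exact ENNReal.add_ne_top.2 ⟨vol_fin _ _ _, ENNReal.ofReal_ne_top⟩) h1
  rwa [ENNReal.toReal_add (vol_fin _ _ _) ENNReal.ofReal_ne_top,
    ENNReal.toReal_ofReal (by positivity)] at h2

lemma rel_const {S : Set ℝ} {x ε : ℝ} (hε : 0 < ε)
    (h : ∀ y, |y - x| < ε → (y ∈ S ↔ x ∈ S)) :
    relMeasure S x ε = 0 ∨ relMeasure S x ε = 1 := by
  have e1 : ∀ y, y ∈ Ioo (x - ε) (x + ε) → |y - x| < ε := by
    rintro y ⟨h1, h2⟩; rw [abs_lt]; constructor <;> linarith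
  unfold relMeasure
  by_cases hx : x ∈ S
  · right
    have : S ∩ Ioo (x - ε) (x + ε) = Ioo (x - ε) (x + ε) :=
      inter_eq_right.2 fun y hy => (h y (e1 y hy)).2 hx
    rw [this, Real.volume_Ioo, ENNReal.toReal_ofReal (by linarith), div_eq_one_iff_eq (by linarith)]
    ring
  · left
    have : S ∩ Ioo (x - ε) (x + ε) = ∅ := by
      ext y; simp only [mem_inter_iff, mem_empty_iff_false, iff_false]
      rintro ⟨h1, h2⟩; exact hx ((h y (e1 y h2)).1 h1)
    rw [this]; simp

/-- from exceptional to eventual bounds -/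
lemma exc_bound {S : Set ℝ} {δ θ p : ℝ} (h : IsExceptionalPoint S δ p) (hθ : θ < δ) :
    ∃ e > 0, ∀ ε, 0 < ε → ε < e → θ ≤ relMeasure S p ε ∧ relMeasure S p ε ≤ 1 - θ := by
  have hev : ∀ᶠ ε in nhdsWithin (0:ℝ) (Ioi 0), 0 < ε := eventually_mem_nhdsWithin
  have hb1 : IsBoundedUnder (· ≥ ·) (nhdsWithin (0:ℝ) (Ioi 0)) (fun ε => relMeasure S p ε) :=
    ⟨0, by rw [eventually_map]; exact hev.mono fun ε hε => rel_nonneg S p hε⟩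
  have hb2 : IsBoundedUnder (· ≤ ·) (nhdsWithin (0:ℝ) (Ioi 0)) (fun ε => relMeasure S p ε) :=
    ⟨1, by rw [eventually_map]; exact hev.mono fun ε hε => rel_le_one S p hε⟩
  have h1 := eventually_lt_of_lt_liminf (lt_of_lt_of_le hθ h.1) hb1
  have h2 := eventually_lt_of_limsup_lt (lt_of_le_of_lt h.2 (show 1 - δ < 1 - θ by linarith)) hb2
  have h3 := h1.and h2
  rw [eventually_nhdsWithin_iff, Metric.eventually_nhds_iff] at h3
  obtain ⟨e, he, h3⟩ := h3
  refine ⟨e, he, fun ε h0 h4 => ?_⟩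
  have := h3 (y := ε) (by rw [Real.dist_eq, sub_zero, abs_of_pos h0]; exact h4) h0
  exact ⟨this.1.le, this.2.le⟩

theorem main_abs (δ τ : ℝ) (hδ0 : 0 ≤ δ) (hτ : 0 < τ) (C : Set ℝ) (hCm : MeasurableSet C)
    (E : Finset ℝ) (s : ℝ → ℝ) (ρ M ω₀ W : ℝ) (ω : ℝ → ℝ) (hρ : 0 < ρ) (hρ1 : ρ ≤ 1)
    (hM0 : 0 ≤ M)
    (hsep : ∀ c ∈ E, ∀ d ∈ E, c ≠ d → 2 * ρ ≤ |c - d|)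
    (hs : ∀ c, |s c| = 1)
    (hloc : ∀ c ∈ E, ∀ x, |x - c| < ρ → x ≠ c → (x ∈ C ↔ s c * (x - c) < 0))
    (hconst : ∀ x, x ∉ E → ∃ e > 0, ∀ y, |y - x| < e → (y ∈ C ↔ x ∈ C))
    (hM : ∀ c ∈ E, |c| ≤ M) (hMC : ∀ x, M < |x| → (x ∈ C ↔ x < 0))
    (hω₀ : 0 < ω₀) (hω : ∀ c ∈ E, ω₀ ≤ ω c) (hW0 : 0 < W) (hW : ∀ c ∈ E, ω c < W)
    (hC : ∀ c ∈ E, relMeasure C c (ω c) ∉ Icc δ (1 - δ)) :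
    ∃ S : Set ℝ, MeasurableSet S ∧ NontrivialSet S ∧
      ∀ p : ℝ, ¬ IsExceptionalPoint S (δ + τ) p := by
  obtain ⟨η, hη, hη1, hη2, hη3, hη4⟩ : ∃ η > 0, η ≤ 1 / 2 ∧ (M + 1) * η < ρ / 2 ∧
      W * η ≤ ρ / 2 ∧ (E.card + 2) * ((M + 1) * η) < τ / 2 * ω₀ := by
    have t : ∀ (a b : ℝ), 0 < b → ∀ᶠ η in nhdsWithin (0:ℝ) (Ioi 0), a * η < b := by
      intro a b hb
      have : Tendsto (fun η : ℝ => a * η) (nhdsWithin (0:ℝ) (Ioi 0)) (nhds (a * 0)) :=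
        (Continuous.tendsto (by fun_prop) 0).mono_left nhdsWithin_le_nhds
      exact this.eventually_lt_const (by simpa using hb)
    have hev : ∀ᶠ ε in nhdsWithin (0:ℝ) (Ioi 0), 0 < ε := eventually_mem_nhdsWithin
    obtain ⟨η, h1, h2, h3, h4, h5⟩ := (hev.and ((t 1 (1/2) (by norm_num)).and
      ((t (M+1) (ρ/2) (by positivity)).and ((t W (ρ/2) (by positivity)).and
      (t ((E.card + 2) * (M + 1)) (τ / 2 * ω₀) (by positivity)))))).exists
    exact ⟨η, h1, by linarith, h3, h4.le, by rw [← mul_assoc]; exact h5⟩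
  set T := lim C E s ρ η with hT
  set κ := (M + 1) * η with hκ
  have hκ0 : 0 < κ := by positivity
  have hfar : ∀ x, (∀ c ∈ E, κ < |x - c|) → (x ∈ T ↔ x ∈ C) := fun x hx =>
    lim_far hη hρ1 hsep hs hloc hM hMC hx
  have hbig : ∀ x, M + 1 < |x| → (x ∈ T ↔ x < 0) := by
    intro x hx
    rw [hfar x, hMC x (by linarith)]
    intro c hc
    have := hM c hc
    have := abs_sub_abs_le_abs_sub x c
    linarith
  refine ⟨T, lim_meas hCm _ _ _ _, ⟨?_, ?_⟩, ?_⟩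
  · refine lt_of_lt_of_le ?_ (measure_mono (show Ioo (-(M+1) - 1) (-(M+1)) ⊆ T from ?_))
    · simp
    · rintro x ⟨h1, h2⟩
      exact (hbig x (by rw [abs_of_neg] <;> linarith)).2 (by linarith)
  · refine lt_of_lt_of_le ?_ (measure_mono (show Ioo (M+1) (M+1+1) ⊆ Tᶜ from ?_))
    · simp
    · rintro x ⟨h1, h2⟩ h3
      have := (hbig x (by rw [abs_of_pos] <;> linarith)).1 h3
      linarith
  intro p hp
  set θ := δ + τ / 2 with hθ
  obtain ⟨e₀, he₀, hP₀⟩ := exc_bound (θ := θ) hp (by rw [hθ]; linarith)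
  let P : ℝ → ℝ → Prop := fun x e =>
    ∀ ε, 0 < ε → ε < e → θ ≤ relMeasure T x ε ∧ relMeasure T x ε ≤ 1 - θ
  have hθ0 : 0 < θ := by positivity
  have near : ∀ x e, 0 < e → P x e → ∃ c ∈ E, |x - c| ≤ κ := by
    intro x e he hP
    by_contra hcon
    push Not at hcon
    have hxE : x ∉ E := fun h => by have := hcon x h; simp at this; linarith
    obtain ⟨e1, he1, hc1⟩ := hconst x hxE
    have hev : ∀ᶠ y in nhds x, ∀ c ∈ E, κ < |y - c| := by
      rw [Filter.eventually_all_finset]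
      intro c hc
      have : Tendsto (fun y => |y - c|) (nhds x) (nhds |x - c|) :=
        Continuous.tendsto (by fun_prop) x
      exact this.eventually_const_lt (hcon c hc)
    obtain ⟨e2, he2, hc2⟩ := Metric.eventually_nhds_iff.1 hev
    set ε := min (e / 2) (min e1 e2)
    have hε : 0 < ε := by positivity
    have hεe : ε < e := lt_of_le_of_lt (min_le_left _ _) (by linarith)
    have hε1 : ε ≤ e1 := (min_le_right _ _).trans (min_le_left _ _)
    have hε2 : ε ≤ e2 := (min_le_right _ _).trans (min_le_right _ _)
    have := hP ε hε hεe
    rcases rel_const (S := T) (x := x) hε (fun y hy => by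
      rw [hfar x hcon, hfar y (hc2 (by rw [Real.dist_eq]; linarith)), hc1 y (by linarith)]) with h | h
    · rw [h] at this; linarith
    · rw [h] at this; linarith
  have step : ∀ x e, 0 < e → P x e → ∃ y, P y (min (2 * e) W) := by
    intro x e he hP
    obtain ⟨c, hc, hxc⟩ := near x e he hP
    refine ⟨s c / η * (x + -c), fun ε h0 h1 => ?_⟩
    have h2 : ε < 2 * e := h1.trans_le (min_le_left _ _)
    have h3 : ε < W := h1.trans_le (min_le_right _ _)
    have h4 : ε * η ≤ ρ / 2 := by nlinarith
    have h5 : ε * η < e := by nlinarith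
    have := rel_scale (C := C) hη hsep hs (x := x) (ε := ε * η) hc (by positivity) (by linarith)
    rw [mul_div_cancel_right₀ _ hη.ne'] at this
    rw [this]
    exact hP _ (by positivity) h5
  have iter : ∀ n : ℕ, ∃ y, P y (min (2 ^ n * e₀) W) := by
    intro n
    induction n with
    | zero => exact ⟨p, fun ε h0 h1 => hP₀ ε h0 (by
        have := h1.trans_le (min_le_left _ _); simpa using this)⟩
    | succ n ih =>
      obtain ⟨y, hy⟩ := ih
      obtain ⟨z, hz⟩ := step y _ (by positivity) hy
      refine ⟨z, fun ε h0 h1 => hz ε h0 (h1.trans_le ?_)⟩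
      refine le_min ?_ (min_le_right _ _)
      rw [mul_min_of_nonneg _ _ (by norm_num : (0:ℝ) ≤ 2)]
      refine le_min ((min_le_left _ _).trans ?_) ((min_le_right _ _).trans ?_)
      · rw [pow_succ]; apply le_of_eq; ring
      · linarith
  obtain ⟨n, hn⟩ := pow_unbounded_of_one_lt (W / e₀) (by norm_num : (1:ℝ) < 2)
  obtain ⟨y, hy⟩ := iter n
  rw [min_eq_right (by rw [div_lt_iff₀ he₀] at hn; exact hn.le)] at hy
  obtain ⟨c, hc, hyc⟩ := near y W hW0 hy
  have hωc : 0 < ω c := hω₀.trans_le (hω c hc)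
  have h1 := hy (ω c) hωc (hW c hc)
  apply hC c hc
  have b1 := vol_pert T C E κ (ω c) y c hκ0.le hyc (fun z hz => (hfar z hz).1)
  have b2 := vol_pert C T E κ (ω c) c y hκ0.le (by rwa [abs_sub_comm]) (fun z hz => (hfar z hz).2)
  have b3 : (E.card + 2) * (2 * κ) ≤ τ / 2 * (2 * ω c) := by
    have := mul_le_mul_of_nonneg_left (hω c hc) (show 0 ≤ τ / 2 by positivity)
    linarith
  unfold relMeasure at h1 ⊢
  rw [le_div_iff₀ (by positivity), div_le_iff₀ (by positivity)] at h1
  rw [mem_Icc, le_div_iff₀ (by positivity), div_le_iff₀ (by positivity)]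
  obtain ⟨h1, h2⟩ := h1
  rw [hθ] at h1 h2
  constructor <;> linarith

end ExcAux

/-- If `0 ≤ δ < 1/2` and `C` is a configuration such that every endpoint `c` of `C` admits a
radius `ω > 0` with `λ(C | I_ω(c)) ∉ [δ, 1-δ]`, then for every `τ > 0` there is a nontrivial
measurable set `S ⊆ ℝ` having no `(δ+τ)`-exceptional point. -/
theorem exists_set_without_exceptional_point_of_config
    (δ : ℝ) (hδ0 : 0 ≤ δ) (hδ1 : δ < 1 / 2)
    (C : Config)
    (hC : ∀ c ∈ C.endpoints, ∃ ω > 0, relMeasure C.carrier c ω ∉ Icc δ (1 - δ))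
    (τ : ℝ) (hτ : 0 < τ) :
    ∃ S : Set ℝ, MeasurableSet S ∧ NontrivialSet S ∧
      ∀ p : ℝ, ¬ IsExceptionalPoint S (δ + τ) p := by
  classical
  have hfin : C.endpoints.Finite :=
    ((finite_range _).union (finite_range _)).insert _
  set E := hfin.toFinset with hE
  have hmem : ∀ c, c ∈ E ↔ c ∈ C.endpoints := fun c => hfin.mem_toFinset
  have h0E : (0:ℝ) ∈ E := by rw [hmem]; exact Or.inl rfl
  have haE : ∀ i, C.a i ∈ E := fun i => by rw [hmem]; exact Or.inr (Or.inl ⟨i, rfl⟩)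
  have hbE : ∀ i, C.b i ∈ E := fun i => by rw [hmem]; exact Or.inr (Or.inr ⟨i, rfl⟩)
  have hbpos : ∀ i, 0 < C.b i := fun i => (C.ha i).trans (C.hab i)
  have hcar : ∀ x, x ∈ C.carrier ↔ x < 0 ∨ ∃ i, C.a i < x ∧ x < C.b i := by
    intro x; simp [Config.carrier]
  -- radii
  have hC' : ∀ c : ℝ, ∃ w : ℝ, c ∈ E → 0 < w ∧ relMeasure C.carrier c w ∉ Icc δ (1 - δ) := by
    intro c
    by_cases h : c ∈ E
    · obtain ⟨w, h1, h2⟩ := hC c ((hmem c).1 h); exact ⟨w, fun _ => ⟨h1, h2⟩⟩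
    · exact ⟨0, fun h' => absurd h' h⟩
  choose ω hω using hC'
  have hev : ∀ᶠ ε in nhdsWithin (0:ℝ) (Ioi 0), 0 < ε := eventually_mem_nhdsWithin
  have t : ∀ (b : ℝ), 0 < b → ∀ᶠ η in nhdsWithin (0:ℝ) (Ioi 0), η < b := fun b hb =>
    nhdsWithin_le_nhds (eventually_lt_nhds hb)
  obtain ⟨ω₀, hω₀, hω₀'⟩ : ∃ ω₀ > 0, ∀ c ∈ E, ω₀ ≤ ω c := by
    have : ∀ᶠ w in nhdsWithin (0:ℝ) (Ioi 0), ∀ c ∈ E, w < ω c := by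
      rw [Filter.eventually_all_finset]
      exact fun c hc => t _ (hω c hc).1
    obtain ⟨w, h1, h2⟩ := (hev.and this).exists
    exact ⟨w, h1, fun c hc => (h2 c hc).le⟩
  obtain ⟨ρ, hρ, hρ1, hsep⟩ : ∃ ρ > 0, ρ ≤ 1 ∧ ∀ c ∈ E, ∀ d ∈ E, c ≠ d → 2 * ρ ≤ |c - d| := by
    have : ∀ᶠ w in nhdsWithin (0:ℝ) (Ioi 0), ∀ c ∈ E, ∀ d ∈ E, c ≠ d → w < |c - d| / 2 := by
      rw [Filter.eventually_all_finset]
      intro c _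
      rw [Filter.eventually_all_finset]
      intro d _
      by_cases h : c = d
      · simp [h]
      · have : 0 < |c - d| := abs_pos.2 (sub_ne_zero.2 h)
        exact (t (|c - d| / 2) (by positivity)).mono fun w hw _ => hw
    obtain ⟨w, h1, h2, h3⟩ := (hev.and ((t 1 one_pos).and this)).exists
    exact ⟨w, h1, h2.le, fun c hc d hd hcd => by have := h3 c hc d hd hcd; linarith⟩
  obtain ⟨W, hW0, hW⟩ : ∃ W > 0, ∀ c ∈ E, ω c < W := by
    have : ∀ᶠ w in atTop, ∀ c ∈ E, ω c < w := by
      rw [Filter.eventually_all_finset]; exact fun c _ => eventually_gt_atTop _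
    obtain ⟨w, h1, h2⟩ := ((eventually_gt_atTop (0:ℝ)).and this).exists
    exact ⟨w, h1, h2⟩
  obtain ⟨M, hM0, hM⟩ : ∃ M ≥ 0, ∀ c ∈ E, |c| ≤ M := by
    have : ∀ᶠ w in atTop, ∀ c ∈ E, |c| ≤ w := by
      rw [Filter.eventually_all_finset]; exact fun c _ => eventually_ge_atTop _
    obtain ⟨w, h1, h2⟩ := ((eventually_ge_atTop (0:ℝ)).and this).exists
    exact ⟨w, h1, h2⟩
  -- separation with signs
  have hsep' : ∀ c ∈ E, ∀ d ∈ E, c < d → c + 2 * ρ ≤ d := by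
    intro c hc d hd h
    have := hsep c hc d hd h.ne
    rw [abs_sub_comm, abs_of_pos (by linarith)] at this
    linarith
  have hba : ∀ i j, i < j → C.b i < C.a j := C.hba
  have hbb : ∀ i j, i ≤ j → C.b i ≤ C.b j := by
    intro i j h
    rcases h.eq_or_lt with h | h
    · rw [h]
    · exact ((hba i j h).trans (C.hab j)).le
  have haa : ∀ i j, i ≤ j → C.a i ≤ C.a j := by
    intro i j h
    rcases h.eq_or_lt with h | h
    · rw [h]
    · exact ((C.hab i).trans (hba i j h)).le
  have hab_ne : ∀ i j, C.a i ≠ C.b j := by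
    intro i j h
    rcases lt_or_ge j i with h1 | h1
    · exact absurd h (hba j i h1).ne'
    · exact absurd h ((haa i j h1).trans_lt (C.hab j)).ne
  refine ExcAux.main_abs δ τ hδ0 hτ C.carrier ?_ E
    (fun c => if c ∈ range C.a then -1 else 1) ρ M ω₀ W ω hρ hρ1 hM0 hsep ?_ ?_ ?_ hM ?_ hω₀ hω₀'
    hW0 hW (fun c hc => (hω c hc).2)
  · exact measurableSet_Iio.union (MeasurableSet.iUnion fun i => measurableSet_Ioo)
  · intro c
    try dsimp only
    split_ifs <;> simp
  · intro c hc x hx hne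
    rw [abs_lt] at hx
    rw [hcar]
    have hcE := (hmem c).1 hc
    try dsimp only
    rcases hcE with h | ⟨i, h⟩ | ⟨i, h⟩
    · have : c ∉ range C.a := by
        rintro ⟨i, hi⟩; have := C.ha i; rw [hi, h] at this; exact lt_irrefl _ this
      rw [if_neg this]
      constructor
      · rintro (h1 | ⟨j, h1, h2⟩)
        · linarith
        · have := hsep' 0 h0E _ (haE j) (C.ha j); linarith
      · intro h1; left; linarith
    · rw [if_pos ⟨i, h⟩]
      have h0 := hsep' 0 h0E _ (haE i) (C.ha i)
      constructor
      · rintro (h1 | ⟨j, h1, h2⟩)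
        · linarith
        · rcases lt_or_ge j i with h3 | h3
          · have := hsep' _ (hbE j) _ (haE i) (hba j i h3); linarith
          · have := haa i j h3; linarith
      · intro h1; right
        have := hsep' _ (haE i) _ (hbE i) (C.hab i)
        exact ⟨i, by linarith, by linarith⟩
    · have : c ∉ range C.a := by
        rintro ⟨j, hj⟩; exact hab_ne j i (hj.trans h.symm)
      rw [if_neg this]
      have h0 := hsep' 0 h0E _ (hbE i) (hbpos i)
      constructor
      · rintro (h1 | ⟨j, h1, h2⟩)
        · linarith
        · rcases lt_or_ge i j with h3 | h3
          · have := hsep' _ (hbE i) _ (haE j) (hba i j h3); linarith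
          · have := hbb j i h3; linarith
      · intro h1; right
        have := hsep' _ (haE i) _ (hbE i) (C.hab i)
        exact ⟨i, by linarith, by linarith⟩
  · intro x hx
    have : ∀ᶠ y in nhds x, ∀ c ∈ E, (y < c ↔ x < c) ∧ (c < y ↔ c < x) := by
      rw [Filter.eventually_all_finset]
      intro c hc
      rcases lt_trichotomy x c with h | h | h
      · filter_upwards [eventually_lt_nhds h] with y hy
        exact ⟨iff_of_true hy h, iff_of_false (not_lt.2 hy.le) (not_lt.2 h.le)⟩
      · exact absurd (h ▸ hc) hx
      · filter_upwards [eventually_gt_nhds h] with y hy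
        exact ⟨iff_of_false (not_lt.2 hy.le) (not_lt.2 h.le), iff_of_true hy h⟩
    obtain ⟨e, he, h⟩ := Metric.eventually_nhds_iff.1 this
    refine ⟨e, he, fun y hy => ?_⟩
    have h' := h (y := y) (by rwa [Real.dist_eq])
    rw [hcar, hcar, (h' 0 h0E).1]
    simp only [(h' _ (haE _)).2, (h' _ (hbE _)).1]
  · intro x hx
    rw [hcar]
    constructor
    · rintro (h | ⟨i, h1, h2⟩)
      · exact h
      · have := C.ha i
        have h3 := hM _ (hbE i)
        rw [abs_of_pos (by linarith)] at h3 hx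
        linarith
    · exact Or.inl
end
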